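/- Let δ(x, y) = y, let X be the polynomial vector field X(x, y) = (y³ + x²y + x⁴, x³ + xy² + y⁴), and let X_Ω be its Newton-polygon principal part X_Ω(x, y) = (y³ + x²y, x³ + xy²). Then the constrained systems (X, δ) and (X_Ω, δ) are orientation-preserving C⁰-orbitally equivalent at (0, 0): the terms x⁴ in the first component and y⁴ in the second component, which lie strictly above the boundary of the Newton polygon, do not change the topological type of the phase portrait near the origin. -/

import Mathlib

/-- A phase curve of the vector field `X` in the set `V`: a differentiable curve
`c : J → V` on a nondegenerate interval `J` with `c'(t) = X(c(t))` for all `t ∈ J`. -/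
def IsPhaseCurve (X : ℝ × ℝ → ℝ × ℝ) (V : Set (ℝ × ℝ)) (J : Set ℝ) (c : ℝ → ℝ × ℝ) : Prop :=
  J.OrdConnected ∧ J.Nontrivial ∧ (∀ t ∈ J, c t ∈ V) ∧
    ∀ t ∈ J, HasDerivWithinAt c (X (c t)) J t

/-- The planar constrained systems `(X, δ)` and `(Y, γ)` are orientation-preserving
`C⁰`-orbitally equivalent at `(p₁, p₂)`: there are open neighborhoods `V₁ ∋ p₁`, `V₂ ∋ p₂`
and a homeomorphism `Φ : V₁ → V₂` sending `p₁` to `p₂` and impasse set to impasse set, which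
carries phase curves of `X` off the impasse set onto phase curves of `Y` off the impasse set
up to continuous strictly increasing reparametrizations, and conversely for `Φ⁻¹`. -/
def OrbitallyEquivAt (X : ℝ × ℝ → ℝ × ℝ) (δ : ℝ × ℝ → ℝ) (p₁ : ℝ × ℝ)
    (Y : ℝ × ℝ → ℝ × ℝ) (γ : ℝ × ℝ → ℝ) (p₂ : ℝ × ℝ) : Prop :=
  ∃ (V₁ V₂ : Set (ℝ × ℝ)) (Φ Φinv : ℝ × ℝ → ℝ × ℝ),
    IsOpen V₁ ∧ IsOpen V₂ ∧ p₁ ∈ V₁ ∧ p₂ ∈ V₂ ∧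
    -- Φ is a homeomorphism from V₁ onto V₂ with inverse Φinv
    ContinuousOn Φ V₁ ∧ ContinuousOn Φinv V₂ ∧
    Set.MapsTo Φ V₁ V₂ ∧ Set.MapsTo Φinv V₂ V₁ ∧
    (∀ z ∈ V₁, Φinv (Φ z) = z) ∧ (∀ z ∈ V₂, Φ (Φinv z) = z) ∧
    Φ p₁ = p₂ ∧
    -- Φ maps the impasse set to the impasse set
    Φ '' ({z | δ z = 0} ∩ V₁) = {z | γ z = 0} ∩ V₂ ∧
    -- Φ maps phase curves of X to phase curves of Y, preserving orientation
    (∀ (J : Set ℝ) (c : ℝ → ℝ × ℝ),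
      IsPhaseCurve X (V₁ \ {z | δ z = 0}) J c →
      ∃ (J' : Set ℝ) (d : ℝ → ℝ × ℝ) (τ : ℝ → ℝ),
        IsPhaseCurve Y (V₂ \ {z | γ z = 0}) J' d ∧
        ContinuousOn τ J ∧ StrictMonoOn τ J ∧ τ '' J = J' ∧
        ∀ t ∈ J, Φ (c t) = d (τ t)) ∧
    -- Φ⁻¹ maps phase curves of Y to phase curves of X, preserving orientation
    (∀ (J : Set ℝ) (d : ℝ → ℝ × ℝ),
      IsPhaseCurve Y (V₂ \ {z | γ z = 0}) J d →
      ∃ (J' : Set ℝ) (c : ℝ → ℝ × ℝ) (τ : ℝ → ℝ),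
        IsPhaseCurve X (V₁ \ {z | δ z = 0}) J' c ∧
        ContinuousOn τ J ∧ StrictMonoOn τ J ∧ τ '' J = J' ∧
        ∀ t ∈ J, Φinv (d t) = c (τ t))

/-!
Near the origin each of the two fields is `X_Ω = (x² + y²) • (y, x)`, which has the first integral
`x² - y²`, plus a perturbation vanishing to fourth order. Reflections reduce the four quadrants to
the first, where the radius `ξ = x + y` is strictly monotone along orbits: in terms of `ξ` the label
`ζ = x² - y²` satisfies a scalar equation `dζ/dξ = R ξ ζ`. Its slope `R` is Lipschitz in `ζ` and
bounded by `ξ`, less than the speed `2 ξ` at which the cone `|ζ| ≤ ξ²` of admissible values opens,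
so every orbit is labelled by the unique point at which its solution meets the boundary of the cone.
Carrying orbits to orbits with the same label and radius fixes the axes, so the homeomorphisms of
the four quadrants fit together. A phase curve off the impasse line `y = 0` crosses `x = 0` at most
once, and the reparametrizations on both sides of the crossing can be glued there.
-/

open Set Filter Topology Asymptotics
open scoped NNReal

/-! ### Orbit arcs -/

theorem nhdsWithin_inter_eq_bot {α : Type*} [TopologicalSpace α] {s u : Set α} {a : α}
    (hu : IsClosed u) (ha : a ∉ u) : 𝓝[s ∩ u] a = ⊥ := by
  rw [← notMem_closure_iff_nhdsWithin_eq_bot]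
  exact fun h => ha (closure_minimal inter_subset_right hu h)

section Halves

variable {α : Type*} [TopologicalSpace α] [LinearOrder α] {J : Set α} {t₀ : α}

theorem nhdsWithin_eq_sup_Iic_Ici (J : Set α) (t₀ t : α) :
    𝓝[J] t = 𝓝[J ∩ Iic t₀] t ⊔ 𝓝[J ∩ Ici t₀] t := by
  rw [← nhdsWithin_union, ← inter_union_distrib_left, Iic_union_Ici, inter_univ]

variable [OrderClosedTopology α]

theorem continuousOn_of_Iic_of_Ici {β : Type*} [TopologicalSpace β] {τ : α → β}
    (hpast : ContinuousOn τ (J ∩ Iic t₀)) (hfuture : ContinuousOn τ (J ∩ Ici t₀)) :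
    ContinuousOn τ J := by
  intro t ht
  rw [ContinuousWithinAt, nhdsWithin_eq_sup_Iic_Ici J t₀ t, tendsto_sup]
  constructor
  · by_cases h : t ∈ Iic t₀
    · exact hpast t ⟨ht, h⟩
    · simp only [nhdsWithin_inter_eq_bot isClosed_Iic h, tendsto_bot]
  · by_cases h : t ∈ Ici t₀
    · exact hfuture t ⟨ht, h⟩
    · simp only [nhdsWithin_inter_eq_bot isClosed_Ici h, tendsto_bot]

theorem isLittleO_of_Iic_of_Ici {E F : Type*} [NormedAddCommGroup E] [NormedAddCommGroup F]
    {u : α → E} {v : α → F} {t : α}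
    (hpast : t ≤ t₀ → u =o[𝓝[J ∩ Iic t₀] t] v)
    (hfuture : t₀ ≤ t → u =o[𝓝[J ∩ Ici t₀] t] v) : u =o[𝓝[J] t] v := by
  rw [nhdsWithin_eq_sup_Iic_Ici J t₀ t]
  refine IsLittleO.sup ?_ ?_
  · by_cases h : t ∈ Iic t₀
    · exact hpast h
    · simp only [nhdsWithin_inter_eq_bot isClosed_Iic h, isLittleO_bot]
  · by_cases h : t ∈ Ici t₀
    · exact hfuture h
    · simp only [nhdsWithin_inter_eq_bot isClosed_Ici h, isLittleO_bot]

end Halves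

theorem isLittleO_sub_smul_of_hasDerivAt {E : Type*} [NormedAddCommGroup E] [NormedSpace ℝ E]
    {β : ℝ → E} {T : ℝ → ℝ} {κ x : ℝ} {w : E} (hT : HasDerivAt T κ x) (hκ : κ ≠ 0)
    (hβ : HasDerivAt β (κ • w) x) :
    (fun y => β y - β x - (T y - T x) • w) =o[𝓝 x] fun y => T y - T x := by
  have hzero : HasDerivAt (fun y => β y - T y • w) 0 x :=
    sub_self (κ • w) ▸ hβ.fun_sub (hT.smul_const w)
  have hrev : (fun y => y - x) =O[𝓝 x] fun y => T y - T x :=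
    (HasDerivAtFilter.isTheta_sub hT hκ).isBigO_symm.comp_tendsto
      (tendsto_id.prodMk tendsto_const_pure)
  refine ((hasDerivAt_iff_isLittleO.1 hzero).trans_isBigO hrev).congr_left fun y => ?_
  rw [smul_zero, sub_zero, sub_smul, sub_sub_sub_comm]

section OrbitArcs

variable {E : Type*} [NormedAddCommGroup E] [NormedSpace ℝ E]

/-- `f` runs along an orbit of `X` in the positive direction: for some continuous strictly
increasing clock `τ` the derivative of `f` with respect to `τ` is `X ∘ f`. As `f` need not be
differentiable in its own parameter, the derivative is expressed by increments. -/
def IsOrbitArc (X : E → E) (J : Set ℝ) (f : ℝ → E) : Prop :=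
  ∃ τ : ℝ → ℝ, ContinuousOn τ J ∧ StrictMonoOn τ J ∧
    ∀ t ∈ J, (fun s => f s - f t - (τ s - τ t) • X (f t)) =o[𝓝[J] t] fun s => τ s - τ t

variable {X : E → E} {J : Set ℝ} {f g : ℝ → E}

theorem IsOrbitArc.congr (hf : IsOrbitArc X J f) (hfg : EqOn f g J) : IsOrbitArc X J g := by
  obtain ⟨τ, hτ, hmono, hlittle⟩ := hf
  refine ⟨τ, hτ, hmono, fun t ht => (hlittle t ht).congr' ?_ EventuallyEq.rfl⟩
  filter_upwards [self_mem_nhdsWithin] with s hs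
  rw [hfg hs, hfg ht]

theorem tendsto_invFunOn_of_strictMonoOn {τ : ℝ → ℝ} (hJ : J.OrdConnected)
    (hτ : ContinuousOn τ J) (hmono : StrictMonoOn τ J) {t : ℝ} (ht : t ∈ J) :
    Tendsto (Function.invFunOn τ J) (𝓝[τ '' J] (τ t)) (𝓝[J] t) := by
  have hleft : LeftInvOn (Function.invFunOn τ J) τ J := hmono.injOn.leftInvOn_invFunOn
  have : (τ '' J).OrdConnected := (hJ.isPreconnected.image τ hτ).ordConnected
  let e : J ≃o τ '' J := hmono.orderIso τ J
  have hval : (τ '' J).domRestrict (Function.invFunOn τ J) = fun y => ((e.symm y : J) : ℝ) := by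
    funext y
    obtain ⟨x, rfl⟩ := e.surjective y
    rw [e.symm_apply_apply]
    exact hleft x.2
  have hcont : ContinuousOn (Function.invFunOn τ J) (τ '' J) := by
    rw [continuousOn_iff_continuous_domRestrict, hval]
    exact continuous_subtype_val.comp e.symm.continuous
  have := (hcont (τ t) ⟨t, ht, rfl⟩).tendsto_nhdsWithin_image
  rwa [hleft ht, hleft.image_image] at this

theorem IsOrbitArc.exists_clock_eq_zero (hf : IsOrbitArc X J f) (t₀ : ℝ) :
    ∃ τ : ℝ → ℝ, ContinuousOn τ J ∧ StrictMonoOn τ J ∧ τ t₀ = 0 ∧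
      ∀ t ∈ J, (fun s => f s - f t - (τ s - τ t) • X (f t)) =o[𝓝[J] t] fun s => τ s - τ t := by
  obtain ⟨τ, hτ, hmono, hlittle⟩ := hf
  refine ⟨fun s => τ s - τ t₀, hτ.sub continuousOn_const,
    fun s hs t ht hst => sub_lt_sub_right (hmono hs ht hst) _, sub_self _, ?_⟩
  simpa only [sub_sub_sub_cancel_right] using hlittle

theorem IsOrbitArc.glue {t₀ : ℝ} (ht₀ : t₀ ∈ J) (hpast : IsOrbitArc X (J ∩ Iic t₀) f)
    (hfuture : IsOrbitArc X (J ∩ Ici t₀) f) : IsOrbitArc X J f := by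
  obtain ⟨τ₁, hτ₁, hmono₁, hzero₁, hlittle₁⟩ := hpast.exists_clock_eq_zero t₀
  obtain ⟨τ₂, hτ₂, hmono₂, hzero₂, hlittle₂⟩ := hfuture.exists_clock_eq_zero t₀
  let τ : ℝ → ℝ := (Iic t₀).piecewise τ₁ τ₂
  have eq₁ : EqOn τ τ₁ (J ∩ Iic t₀) := fun s hs => piecewise_eq_of_mem _ _ _ hs.2
  have eq₂ : EqOn τ τ₂ (J ∩ Ici t₀) := by
    rintro s ⟨-, hs⟩
    rcases (mem_Ici.1 hs).eq_or_lt with rfl | hlt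
    · rw [hzero₂, ← hzero₁]
      exact piecewise_eq_of_mem _ _ _ self_mem_Iic
    · exact piecewise_eq_of_notMem _ _ _ (notMem_Iic.2 hlt)
  have hunion : J ∩ Iic t₀ ∪ J ∩ Ici t₀ = J := by
    rw [← inter_union_distrib_left, Iic_union_Ici, inter_univ]
  refine ⟨τ, ?_, ?_, fun t ht => ?_⟩
  · exact continuousOn_of_Iic_of_Ici (hτ₁.congr eq₁) (hτ₂.congr eq₂)
  · rw [← hunion]
    exact (hmono₁.congr eq₁.symm).union (hmono₂.congr eq₂.symm) (c := t₀)
      ⟨⟨ht₀, self_mem_Iic⟩, fun s hs => hs.2⟩ ⟨⟨ht₀, self_mem_Ici⟩, fun s hs => hs.2⟩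
  · refine isLittleO_of_Iic_of_Ici (fun h => (hlittle₁ t ⟨ht, h⟩).congr' ?_ ?_)
      (fun h => (hlittle₂ t ⟨ht, h⟩).congr' ?_ ?_)
    all_goals filter_upwards [self_mem_nhdsWithin] with s hs
    · rw [eq₁ hs, eq₁ ⟨ht, h⟩]
    · rw [eq₁ hs, eq₁ ⟨ht, h⟩]
    · rw [eq₂ hs, eq₂ ⟨ht, h⟩]
    · rw [eq₂ hs, eq₂ ⟨ht, h⟩]

theorem isOrbitArc_comp {β : ℝ → E} {m T κ : ℝ → ℝ} (hm : ContinuousOn m J)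
    (hT : ∀ t ∈ J, HasDerivAt T (κ (m t)) (m t)) (hκ : ∀ t ∈ J, κ (m t) ≠ 0)
    (hmono : StrictMonoOn (T ∘ m) J)
    (hβ : ∀ t ∈ J, HasDerivAt β (κ (m t) • X (β (m t))) (m t)) : IsOrbitArc X J (β ∘ m) :=
  ⟨T ∘ m, fun t ht => (hT t ht).continuousAt.comp_continuousWithinAt (hm t ht), hmono,
    fun t ht =>
    (isLittleO_sub_smul_of_hasDerivAt (hT t ht) (hκ t ht) (hβ t ht)).comp_tendsto (hm t ht)⟩

theorem IsOrbitArc.exists_isPhaseCurve {X : ℝ × ℝ → ℝ × ℝ} {f : ℝ → ℝ × ℝ} {V : Set (ℝ × ℝ)}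
    (hf : IsOrbitArc X J f) (hJ : J.OrdConnected) (hJ' : J.Nontrivial) (hV : MapsTo f J V) :
    ∃ (J' : Set ℝ) (d : ℝ → ℝ × ℝ) (τ : ℝ → ℝ), IsPhaseCurve X V J' d ∧
      ContinuousOn τ J ∧ StrictMonoOn τ J ∧ τ '' J = J' ∧ ∀ t ∈ J, f t = d (τ t) := by
  obtain ⟨τ, hτ, hmono, hlittle⟩ := hf
  have hleft : LeftInvOn (Function.invFunOn τ J) τ J := hmono.injOn.leftInvOn_invFunOn
  refine ⟨τ '' J, f ∘ Function.invFunOn τ J, τ,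
    ⟨(hJ.isPreconnected.image τ hτ).ordConnected, hJ'.image_of_injOn hmono.injOn, ?_, ?_⟩,
    hτ, hmono, rfl, fun t ht => congrArg f (hleft ht).symm⟩
  · rintro _ ⟨t, ht, rfl⟩
    rw [Function.comp_apply, hleft ht]
    exact hV ht
  · rintro _ ⟨t, ht, rfl⟩
    rw [hasDerivWithinAt_iff_isLittleO]
    have hcomp := (hlittle t ht).comp_tendsto (tendsto_invFunOn_of_strictMonoOn hJ hτ hmono ht)
    refine hcomp.congr' ?_ ?_ <;>
    · filter_upwards [self_mem_nhdsWithin]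
      rintro _ ⟨s, hs, rfl⟩
      simp only [Function.comp_apply, hleft hs, hleft ht]

theorem IsOrbitArc.mul_left {X : ℝ × ℝ → ℝ × ℝ} {f : ℝ → ℝ × ℝ} {s : ℝ × ℝ} (hs : s * s = 1)
    (hf : IsOrbitArc X J f) :
    IsOrbitArc (fun p => s * X (s * p)) J (fun t => s * f t) := by
  obtain ⟨τ, hτ, hmono, hlittle⟩ := hf
  refine ⟨τ, hτ, hmono, fun t ht => ((hlittle t ht).const_mul_left s).congr_left fun u => ?_⟩
  simp only [← mul_assoc, hs, one_mul, mul_sub, mul_smul_comm]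

end OrbitArcs

/-! ### One-dimensional comparison -/

section Comparison

variable {E : Type*} [NormedAddCommGroup E] [NormedSpace ℝ E] {J : Set ℝ}

theorem norm_le_exp_mul_norm_of_le {D D' : ℝ → E} {K : ℝ} (hJ : J.OrdConnected)
    (hD : ∀ t ∈ J, HasDerivWithinAt D (D' t) J t) (hK : ∀ t ∈ J, ‖D' t‖ ≤ K * ‖D t‖)
    {s t : ℝ} (hs : s ∈ J) (ht : t ∈ J) (hst : s ≤ t) :
    ‖D t‖ ≤ Real.exp (K * (t - s)) * ‖D s‖ := by
  have hsub : Icc s t ⊆ J := hJ.out hs ht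
  have hright : ∀ x ∈ Ico s t, HasDerivWithinAt D (D' x) (Ici x) x := fun x hx =>
    (hD x (hsub (Ico_subset_Icc_self hx))).mono_of_mem_nhdsWithin
      (mem_of_superset (Icc_mem_nhdsGE_of_mem hx) hsub)
  have hgronwall := norm_le_gronwallBound_of_norm_deriv_right_le (ε := 0)
    (fun x hx => (hD x (hsub hx)).continuousWithinAt.mono hsub) hright le_rfl
    (fun x hx => (add_zero (K * ‖D x‖)).symm ▸ hK x (hsub (Ico_subset_Icc_self hx)))
    t (right_mem_Icc.2 hst)
  rwa [gronwallBound_ε0, mul_comm] at hgronwall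

theorem hasDerivWithinAt_comp_neg {f : ℝ → E} {v : E} {t : ℝ}
    (hf : HasDerivWithinAt f v J (-t)) : HasDerivWithinAt (fun x => f (-x)) (-v) (-J) t :=
  neg_one_smul ℝ v ▸ hf.scomp t (hasDerivAt_neg t).hasDerivWithinAt (s := -J) fun _ hx => hx

theorem norm_le_exp_mul_norm {D D' : ℝ → E} {K : ℝ} (hJ : J.OrdConnected)
    (hD : ∀ t ∈ J, HasDerivWithinAt D (D' t) J t) (hK : ∀ t ∈ J, ‖D' t‖ ≤ K * ‖D t‖)
    {s t : ℝ} (hs : s ∈ J) (ht : t ∈ J) : ‖D t‖ ≤ Real.exp (K * |t - s|) * ‖D s‖ := by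
  rcases le_total s t with hst | hts
  · rw [abs_of_nonneg (sub_nonneg.2 hst)]
    exact norm_le_exp_mul_norm_of_le hJ hD hK hs ht hst
  · have hback := norm_le_exp_mul_norm_of_le (J := -J) (s := -s) (t := -t)
      (hJ.preimage_anti fun _ _ => neg_le_neg)
      (fun x hx => hasDerivWithinAt_comp_neg (hD (-x) hx))
      (fun x hx => (norm_neg (D' (-x))).trans_le (hK (-x) hx))
      (by rwa [Set.mem_neg, neg_neg]) (by rwa [Set.mem_neg, neg_neg]) (neg_le_neg hts)
    rwa [neg_neg, neg_neg, neg_sub_neg, ← abs_of_nonneg (sub_nonneg.2 hts), abs_sub_comm] at hback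

variable {f f' : ℝ → ℝ}

theorem nonneg_of_forall_zero_deriv_pos (hJ : J.OrdConnected)
    (hf : ∀ t ∈ J, HasDerivWithinAt f (f' t) J t) (hpos : ∀ t ∈ J, f t = 0 → 0 < f' t)
    {s t : ℝ} (hs : s ∈ J) (ht : t ∈ J) (hst : s ≤ t) (hfs : 0 ≤ f s) : 0 ≤ f t := by
  have hsub : Icc s t ⊆ J := hJ.out hs ht
  have hle := image_le_of_deriv_right_lt_deriv_boundary (f := -f) (f' := -f') (B := 0) (B' := 0)
    (fun x hx => (hf x (hsub hx)).continuousWithinAt.neg.mono hsub)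
    (fun x hx => ((hf x (hsub (Ico_subset_Icc_self hx))).mono_of_mem_nhdsWithin
      (mem_of_superset (Icc_mem_nhdsGE_of_mem hx) hsub)).neg)
    (neg_nonpos.2 hfs) (fun x => hasDerivAt_const x 0)
    (fun x hx hzero => neg_neg_iff_pos.2
      (hpos x (hsub (Ico_subset_Icc_self hx)) (neg_eq_zero.1 hzero)))
    (right_mem_Icc.2 hst)
  exact neg_nonpos.1 hle

theorem nonpos_of_forall_zero_deriv_pos (hJ : J.OrdConnected)
    (hf : ∀ t ∈ J, HasDerivWithinAt f (f' t) J t) (hpos : ∀ t ∈ J, f t = 0 → 0 < f' t)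
    {s t : ℝ} (hs : s ∈ J) (ht : t ∈ J) (hst : s ≤ t) (hft : f t ≤ 0) : f s ≤ 0 := by
  have hback := nonneg_of_forall_zero_deriv_pos (J := -J) (f := fun x => -f (-x))
    (f' := fun x => f' (-x)) (s := -t) (t := -s) (hJ.preimage_anti fun _ _ => neg_le_neg)
    (fun x hx => by simpa only [neg_neg] using (hasDerivWithinAt_comp_neg (hf (-x) hx)).fun_neg)
    (fun x hx hzero => hpos (-x) hx (neg_eq_zero.1 hzero))
    (by rwa [Set.mem_neg, neg_neg]) (by rwa [Set.mem_neg, neg_neg]) (neg_le_neg hst)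
    (by rwa [neg_neg, neg_nonneg])
  rwa [neg_neg, neg_nonneg] at hback

end Comparison

/-! ### Slope equations preserving a parabolic cone -/

section ConeSlope

/-- Conditions on a scalar equation `dζ/dξ = R ξ ζ`, `ξ ∈ [0, r]`, making it globally solvable and
making the cone `|ζ| ≤ ξ²` forward invariant: the boundary of the cone moves with speed `2 ξ`. -/
structure IsConeSlope (R : ℝ → ℝ → ℝ) (r : ℝ) (K : ℝ≥0) : Prop where
  lipschitzWith : ∀ ξ ∈ Icc 0 r, LipschitzWith K (R ξ)
  continuousOn : ∀ ζ, ContinuousOn (R · ζ) (Icc 0 r)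
  abs_apply_le : ∀ ξ ∈ Icc 0 r, ∀ ζ, |R ξ ζ| ≤ ξ

variable {R : ℝ → ℝ → ℝ} {r : ℝ} {K : ℝ≥0} {Z W : ℝ → ℝ} {s t h h' ξ ξ' ζ : ℝ}

theorem IsConeSlope.exists_solution (hR : IsConeSlope R r K) (hξ : ξ ∈ Icc 0 r) (ζ : ℝ) :
    ∃ Z, IsIntegralCurveOn Z R (Icc 0 r) ∧ Z ξ = ζ := by
  have hr : 0 ≤ r := hξ.1.trans hξ.2
  have hPL : IsPicardLindelof R (⟨ξ, hξ⟩ : Icc 0 r) ζ (r.toNNReal * r.toNNReal) 0 r.toNNReal K :=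
    { lipschitzOnWith := fun t ht => (hR.lipschitzWith t ht).lipschitzOnWith
      continuousOn := fun x _ => hR.continuousOn x
      norm_le := fun t ht x _ =>
        (hR.abs_apply_le t ht x).trans (ht.2.trans (Real.le_coe_toNNReal r))
      mul_max_le := by
        simp only [NNReal.coe_mul, NNReal.coe_zero, sub_zero, Real.coe_toNNReal r hr]
        gcongr
        exact max_le (sub_le_self r hξ.1) hξ.2 }
  obtain ⟨Z, hZ, hsol⟩ := hPL.exists_eq_forall_mem_Icc_hasDerivWithinAt₀
  exact ⟨Z, hsol, hZ⟩

theorem IsConeSlope.abs_sub_le_exp_mul (hR : IsConeSlope R r K)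
    (hZ : IsIntegralCurveOn Z R (Icc 0 r)) (hW : IsIntegralCurveOn W R (Icc 0 r))
    (hs : s ∈ Icc 0 r) (ht : t ∈ Icc 0 r) :
    |Z t - W t| ≤ Real.exp (K * r) * |Z s - W s| := by
  have hgronwall := norm_le_exp_mul_norm (K := K) ordConnected_Icc
    (fun t ht => (hZ t ht).fun_sub (hW t ht))
    (fun t ht => (hR.lipschitzWith t ht).norm_sub_le (Z t) (W t)) hs ht
  refine hgronwall.trans ?_
  gcongr
  · exact abs_le.2 ⟨by linarith [hs.2, ht.1], by linarith [ht.2, hs.1]⟩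
  · exact le_rfl

theorem IsConeSlope.eqOn (hR : IsConeSlope R r K) (hZ : IsIntegralCurveOn Z R (Icc 0 r))
    (hW : IsIntegralCurveOn W R (Icc 0 r)) (hs : s ∈ Icc 0 r) (heq : Z s = W s) :
    EqOn Z W (Icc 0 r) := by
  intro t ht
  have hle := hR.abs_sub_le_exp_mul hZ hW hs ht
  rw [heq, sub_self, abs_zero, mul_zero] at hle
  exact sub_eq_zero.1 (abs_nonpos_iff.1 hle)

theorem strictMonoOn_sq_add_of_abs_deriv_le {F F' : ℝ → ℝ}
    (hF : ∀ ξ ∈ Icc 0 r, HasDerivWithinAt F (F' ξ) (Icc 0 r) ξ) (hF' : ∀ ξ ∈ Icc 0 r, |F' ξ| ≤ ξ) :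
    StrictMonoOn (fun ξ => ξ ^ 2 + F ξ) (Icc 0 r) := by
  have hderiv : ∀ ξ ∈ Icc 0 r,
      HasDerivWithinAt (fun ξ => ξ ^ 2 + F ξ) (2 * ξ + F' ξ) (Icc 0 r) ξ := fun ξ hξ => by
    simpa using (hasDerivAt_pow 2 ξ).hasDerivWithinAt.fun_add (hF ξ hξ)
  refine strictMonoOn_of_hasDerivWithinAt_pos (convex_Icc 0 r)
    (fun ξ hξ => (hderiv ξ hξ).continuousWithinAt)
    (fun ξ hξ => (hderiv ξ (interior_subset hξ)).mono interior_subset) fun ξ hξ => ?_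
  have hle := (abs_le.1 (hF' ξ (interior_subset hξ))).1
  rw [interior_Icc] at hξ
  linarith [hξ.1]

theorem IsConeSlope.abs_sub_lt (hR : IsConeSlope R r K) (hZ : IsIntegralCurveOn Z R (Icc 0 r))
    (hs : s ∈ Icc 0 r) (ht : t ∈ Icc 0 r) (hst : s < t) : |Z t - Z s| < t ^ 2 - s ^ 2 := by
  have hplus := strictMonoOn_sq_add_of_abs_deriv_le hZ
    (fun ξ hξ => hR.abs_apply_le ξ hξ (Z ξ)) hs ht hst
  have hminus := strictMonoOn_sq_add_of_abs_deriv_le (fun ξ hξ => (hZ ξ hξ).fun_neg)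
    (fun ξ hξ => (abs_neg _).trans_le (hR.abs_apply_le ξ hξ (Z ξ))) hs ht hst
  simp only at hplus hminus
  exact abs_lt.2 ⟨by linarith, by linarith⟩

theorem IsConeSlope.abs_sub_le (hR : IsConeSlope R r K) (hZ : IsIntegralCurveOn Z R (Icc 0 r))
    (hs : s ∈ Icc 0 r) (ht : t ∈ Icc 0 r) : |Z t - Z s| ≤ |t ^ 2 - s ^ 2| := by
  rcases lt_trichotomy s t with hst | rfl | hts
  · exact (hR.abs_sub_lt hZ hs ht hst).le.trans (le_abs_self _)
  · rw [sub_self, sub_self]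
  · rw [abs_sub_comm, abs_sub_comm (t ^ 2)]
    exact (hR.abs_sub_lt hZ ht hs hts).le.trans (le_abs_self _)

theorem IsConeSlope.abs_lt_sq (hR : IsConeSlope R r K) (hZ : IsIntegralCurveOn Z R (Icc 0 r))
    (hs : s ∈ Icc 0 r) (ht : t ∈ Icc 0 r) (hst : s < t) (hcone : |Z s| ≤ s ^ 2) :
    |Z t| < t ^ 2 := by
  linarith [hR.abs_sub_lt hZ hs ht hst, abs_sub_abs_le_abs_sub (Z t) (Z s)]

variable (R r) in
/-- The solution of `dζ/dξ = R ξ ζ` which meets the boundary `|ζ| = ξ²` of the cone at height `h`.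
The height at the boundary labels the solution. -/
noncomputable def leaf (h : ℝ) : ℝ → ℝ :=
  Classical.epsilon fun Z => IsIntegralCurveOn Z R (Icc 0 r) ∧ Z √|h| = h

theorem abs_le_sq_of_mem_Icc (hξ : ξ ∈ Icc 0 r) (hh : |h| ≤ ξ ^ 2) : |h| ≤ r ^ 2 :=
  hh.trans (pow_le_pow_left₀ hξ.1 hξ.2 2)

theorem sqrt_abs_mem_Icc (hr : 0 ≤ r) (hh : |h| ≤ r ^ 2) : √|h| ∈ Icc 0 r :=
  ⟨Real.sqrt_nonneg _, (Real.sqrt_le_left hr).2 hh⟩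

theorem leaf_spec (hR : IsConeSlope R r K) (hr : 0 ≤ r) (hh : |h| ≤ r ^ 2) :
    IsIntegralCurveOn (leaf R r h) R (Icc 0 r) ∧ leaf R r h √|h| = h :=
  Classical.epsilon_spec (hR.exists_solution (sqrt_abs_mem_Icc hr hh) h)

theorem leaf_eq_self (hR : IsConeSlope R r K) (hξ : ξ ∈ Icc 0 r) (hh : |h| = ξ ^ 2) :
    leaf R r h ξ = h := by
  have hspec := (leaf_spec hR (hξ.1.trans hξ.2) (abs_le_sq_of_mem_Icc hξ hh.le)).2
  rwa [hh, Real.sqrt_sq hξ.1] at hspec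

theorem abs_leaf_lt_sq (hR : IsConeSlope R r K) (hξ : ξ ∈ Icc 0 r) (hh : |h| < ξ ^ 2) :
    |leaf R r h ξ| < ξ ^ 2 := by
  have hr : 0 ≤ r := hξ.1.trans hξ.2
  have hle := abs_le_sq_of_mem_Icc hξ hh.le
  obtain ⟨hsol, hval⟩ := leaf_spec hR hr hle
  refine hR.abs_lt_sq hsol (sqrt_abs_mem_Icc hr hle) hξ ?_ ?_
  · simpa only [Real.sqrt_sq hξ.1] using Real.sqrt_lt_sqrt (abs_nonneg h) hh
  · rw [hval, Real.sq_sqrt (abs_nonneg h)]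

theorem abs_leaf_le_sq (hR : IsConeSlope R r K) (hξ : ξ ∈ Icc 0 r) (hh : |h| ≤ ξ ^ 2) :
    |leaf R r h ξ| ≤ ξ ^ 2 := by
  rcases hh.lt_or_eq with hlt | heq
  · exact (abs_leaf_lt_sq hR hξ hlt).le
  · rw [leaf_eq_self hR hξ heq, heq]

theorem abs_le_sq_of_abs_leaf_le_sq (hR : IsConeSlope R r K) (hξ : ξ ∈ Icc 0 r)
    (hh : |h| ≤ r ^ 2) (hleaf : |leaf R r h ξ| ≤ ξ ^ 2) : |h| ≤ ξ ^ 2 := by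
  have hr : 0 ≤ r := hξ.1.trans hξ.2
  obtain ⟨hsol, hval⟩ := leaf_spec hR hr hh
  by_contra! hlt
  have habs := hR.abs_lt_sq hsol hξ (sqrt_abs_mem_Icc hr hh) ((Real.lt_sqrt hξ.1).2 hlt) hleaf
  rw [hval, Real.sq_sqrt (abs_nonneg h)] at habs
  exact habs.false

theorem eq_of_leaf_eq (hR : IsConeSlope R r K) (hξ : ξ ∈ Icc 0 r) (hh : |h| ≤ r ^ 2)
    (hh' : |h'| ≤ r ^ 2) (heq : leaf R r h ξ = leaf R r h' ξ) : h = h' := by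
  wlog hle : |h'| ≤ |h| generalizing h h'
  · exact (this hh' hh heq.symm (le_of_not_ge hle)).symm
  have hr : 0 ≤ r := hξ.1.trans hξ.2
  have hs := sqrt_abs_mem_Icc hr hh
  obtain ⟨hsol, hval⟩ := leaf_spec hR hr hh
  have hmeet : h = leaf R r h' √|h| :=
    hval.symm.trans (hR.eqOn hsol (leaf_spec hR hr hh').1 hξ heq hs)
  have hsq : √|h| ^ 2 = |h| := Real.sq_sqrt (abs_nonneg h)
  rcases hle.lt_or_eq with hlt | heq'
  · have habs := abs_leaf_lt_sq hR hs (hlt.trans_eq hsq.symm)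
    rw [← hmeet, hsq] at habs
    exact absurd habs (lt_irrefl _)
  · rwa [leaf_eq_self hR hs (heq'.trans hsq.symm)] at hmeet

theorem abs_leaf_sub_le (hR : IsConeSlope R r K) (hξ : ξ ∈ Icc 0 r) (hξ' : ξ' ∈ Icc 0 r)
    (hh : |h| ≤ r ^ 2) (hh' : |h'| ≤ r ^ 2) :
    |leaf R r h' ξ' - leaf R r h ξ| ≤
      |ξ' ^ 2 - ξ ^ 2| + Real.exp (K * r) * (2 * |h' - h|) := by
  have hr : 0 ≤ r := hξ.1.trans hξ.2
  obtain ⟨hsol, hval⟩ := leaf_spec hR hr hh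
  obtain ⟨hsol', hval'⟩ := leaf_spec hR hr hh'
  have hs := sqrt_abs_mem_Icc hr hh
  have hlabel : |leaf R r h' √|h| - h'| ≤ |h' - h| := by
    have hle := hR.abs_sub_le hsol' (sqrt_abs_mem_Icc hr hh') hs
    rw [hval', Real.sq_sqrt (abs_nonneg h), Real.sq_sqrt (abs_nonneg h')] at hle
    exact hle.trans ((abs_abs_sub_abs_le_abs_sub h h').trans_eq (abs_sub_comm h h'))
  calc |leaf R r h' ξ' - leaf R r h ξ|
      ≤ |leaf R r h' ξ' - leaf R r h' ξ| + |leaf R r h' ξ - leaf R r h ξ| := abs_sub_le _ _ _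
    _ ≤ |ξ' ^ 2 - ξ ^ 2| + Real.exp (K * r) * |leaf R r h' (√|h|) - leaf R r h (√|h|)| :=
      add_le_add (hR.abs_sub_le hsol' hξ hξ') (hR.abs_sub_le_exp_mul hsol' hsol hs hξ)
    _ ≤ |ξ' ^ 2 - ξ ^ 2| + Real.exp (K * r) * (2 * |h' - h|) := by
      gcongr
      rw [hval]
      linarith [abs_sub_le (leaf R r h' √|h|) h' h]

theorem continuousOn_leaf (hR : IsConeSlope R r K) :
    ContinuousOn (fun p : ℝ × ℝ => leaf R r p.1 p.2) {p | |p.1| ≤ r ^ 2 ∧ p.2 ∈ Icc 0 r} := by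
  intro p hp
  let bound : ℝ × ℝ → ℝ := fun q =>
    |q.2 ^ 2 - p.2 ^ 2| + Real.exp (K * r) * (2 * |q.1 - p.1|)
  have hbound : Tendsto bound (𝓝[{p | |p.1| ≤ r ^ 2 ∧ p.2 ∈ Icc 0 r}] p) (𝓝 0) := by
    have : Continuous bound := by fun_prop
    simpa [bound] using (this.tendsto p).mono_left nhdsWithin_le_nhds
  refine tendsto_iff_dist_tendsto_zero.2
    (squeeze_zero' (Eventually.of_forall fun _ => dist_nonneg) ?_ hbound)
  filter_upwards [self_mem_nhdsWithin] with q hq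
  exact abs_leaf_sub_le hR hp.2 hq.2 hp.1 hq.1

theorem exists_leaf_eq (hR : IsConeSlope R r K) (hξ : ξ ∈ Icc 0 r) (hζ : |ζ| ≤ ξ ^ 2) :
    ∃ h, |h| ≤ ξ ^ 2 ∧ leaf R r h ξ = ζ := by
  have habs : |ξ ^ 2| = ξ ^ 2 := abs_of_nonneg (sq_nonneg ξ)
  have hcont : ContinuousOn (fun h => leaf R r h ξ) (Icc (-ξ ^ 2) (ξ ^ 2)) :=
    (continuousOn_leaf hR).comp (f := fun h => (h, ξ)) (by fun_prop)
      fun h hh => ⟨abs_le_sq_of_mem_Icc hξ (abs_le.2 hh), hξ⟩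
  have hivt := intermediate_value_Icc (neg_le_self (sq_nonneg ξ)) hcont
  rw [leaf_eq_self hR hξ ((abs_neg _).trans habs), leaf_eq_self hR hξ habs] at hivt
  obtain ⟨h, hh, heq⟩ := hivt (abs_le.1 hζ)
  exact ⟨h, abs_le.2 hh, heq⟩

end ConeSlope

/-! ### Radius and label coordinates in the first quadrant -/

section ConePoint

/-- The points of the closed first quadrant below the line `x + y = r`. -/
def quadrantTriangle (r : ℝ) : Set (ℝ × ℝ) := {p | 0 ≤ p ∧ p.1 + p.2 ≤ r}

/-- The point of the first quadrant with radius `x + y = ξ` and label `x² - y² = ζ`; it makes sense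
for `|ζ| ≤ ξ²`. The division by zero puts `conePoint 0 ζ` at the origin. -/
noncomputable def conePoint (ξ ζ : ℝ) : ℝ × ℝ := ((ξ + ζ / ξ) / 2, (ξ - ζ / ξ) / 2)

variable {ξ ζ ζ' r : ℝ} {p : ℝ × ℝ}

theorem conePoint_fst_add_snd (ξ ζ : ℝ) : (conePoint ξ ζ).1 + (conePoint ξ ζ).2 = ξ := by
  simp only [conePoint]
  ring

theorem abs_div_le_of_abs_le_sq (hξ : 0 ≤ ξ) (hζ : |ζ| ≤ ξ ^ 2) : |ζ / ξ| ≤ ξ := by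
  rw [abs_div, abs_of_nonneg hξ]
  exact div_le_of_le_mul₀ hξ hξ (hζ.trans_eq (sq ξ))

theorem conePoint_nonneg (hξ : 0 ≤ ξ) (hζ : |ζ| ≤ ξ ^ 2) : 0 ≤ conePoint ξ ζ := by
  obtain ⟨hlower, hupper⟩ := abs_le.1 (abs_div_le_of_abs_le_sq hξ hζ)
  exact ⟨by simp only [conePoint, Prod.fst_zero]; linarith,
    by simp only [conePoint, Prod.snd_zero]; linarith⟩

theorem conePoint_sq_sub_sq (hζ : |ζ| ≤ ξ ^ 2) :
    (conePoint ξ ζ).1 ^ 2 - (conePoint ξ ζ).2 ^ 2 = ζ := by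
  rcases eq_or_ne ξ 0 with rfl | hξ
  · have hzero : ζ = 0 := by simpa using hζ
    simp [conePoint, hzero]
  · simp only [conePoint]
    field_simp
    ring

theorem conePoint_add_sq_sub_sq (hp : 0 ≤ p) :
    conePoint (p.1 + p.2) (p.1 ^ 2 - p.2 ^ 2) = p := by
  obtain ⟨hx, hy⟩ : 0 ≤ p.1 ∧ 0 ≤ p.2 := hp
  rcases (add_nonneg hx hy).eq_or_lt with hzero | hpos
  · have h₁ : p.1 = 0 := by linarith
    have h₂ : p.2 = 0 := by linarith
    simp [conePoint, h₁, h₂, Prod.ext_iff]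
  · have hdiv : (p.1 ^ 2 - p.2 ^ 2) / (p.1 + p.2) = p.1 - p.2 := by
      rw [sq_sub_sq, mul_div_cancel_left₀ _ hpos.ne']
    ext <;> simp only [conePoint, hdiv] <;> ring

theorem abs_sq_sub_sq_le (hp : 0 ≤ p) : |p.1 ^ 2 - p.2 ^ 2| ≤ (p.1 + p.2) ^ 2 := by
  have := mul_nonneg hp.1 hp.2
  exact abs_le.2 ⟨by nlinarith [sq_nonneg p.1], by nlinarith [sq_nonneg p.2]⟩

theorem conePoint_mem_quadrantTriangle (hξ : ξ ∈ Icc 0 r) (hζ : |ζ| ≤ ξ ^ 2) :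
    conePoint ξ ζ ∈ quadrantTriangle r :=
  ⟨conePoint_nonneg hξ.1 hζ, (conePoint_fst_add_snd ξ ζ).trans_le hξ.2⟩

theorem continuousOn_conePoint :
    ContinuousOn (fun q : ℝ × ℝ => conePoint q.1 q.2) {q | 0 ≤ q.1 ∧ |q.2| ≤ q.1 ^ 2} := by
  have hdiv : ContinuousOn (fun q : ℝ × ℝ => q.2 / q.1) {q | 0 ≤ q.1 ∧ |q.2| ≤ q.1 ^ 2} := by
    intro q _
    rcases eq_or_ne q.1 0 with hzero | hne
    · rw [ContinuousWithinAt, hzero, div_zero]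
      refine squeeze_zero_norm' ?_ (a := Prod.fst) ?_
      · filter_upwards [self_mem_nhdsWithin] with q' hq'
        exact abs_div_le_of_abs_le_sq hq'.1 hq'.2
      · exact hzero ▸ (continuous_fst.tendsto q).mono_left nhdsWithin_le_nhds
    · exact (continuousAt_snd.div continuousAt_fst hne).continuousWithinAt
  exact ((continuousOn_fst.add hdiv).div_const 2).prodMk ((continuousOn_fst.sub hdiv).div_const 2)

theorem norm_conePoint_sub (hξ : 0 < ξ) :
    ‖conePoint ξ ζ - conePoint ξ ζ'‖ = |ζ - ζ'| / (2 * ξ) := by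
  have h₁ : (ξ + ζ / ξ) / 2 - (ξ + ζ' / ξ) / 2 = (ζ - ζ') / (2 * ξ) := by field_simp; ring
  have h₂ : (ξ - ζ / ξ) / 2 - (ξ - ζ' / ξ) / 2 = -((ζ - ζ') / (2 * ξ)) := by field_simp; ring
  rw [conePoint, conePoint, Prod.mk_sub_mk, h₁, h₂, Prod.norm_mk, norm_neg, max_self,
    Real.norm_eq_abs, abs_div, abs_of_pos (mul_pos two_pos hξ)]

/-- The truncation of `ζ` to the interval `[-c, c]`, used to extend functions of a label `ζ` to the
whole line. -/
def clampAbs (c ζ : ℝ) : ℝ := max (-c) (min c ζ)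

theorem abs_clampAbs_le {c : ℝ} (hc : 0 ≤ c) (ζ : ℝ) : |clampAbs c ζ| ≤ c :=
  abs_le.2 ⟨le_max_left _ _, max_le (neg_le_self hc) (min_le_left _ _)⟩

theorem clampAbs_of_abs_le {c : ℝ} (hζ : |ζ| ≤ c) : clampAbs c ζ = ζ := by
  rw [clampAbs, min_eq_right (abs_le.1 hζ).2, max_eq_right (abs_le.1 hζ).1]

theorem abs_clampAbs_sub_le (c ζ ζ' : ℝ) : |clampAbs c ζ - clampAbs c ζ'| ≤ |ζ - ζ'| := by
  simpa only [clampAbs, Real.dist_eq, NNReal.coe_one, one_mul, id] using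
    ((LipschitzWith.id.const_min c).const_max (-c)).dist_le_mul ζ ζ'

theorem continuous_clampAbs : Continuous fun q : ℝ × ℝ => clampAbs q.1 q.2 := by
  unfold clampAbs
  fun_prop

end ConePoint

/-! ### Leaves of the perturbed field -/

section ConeSlope

/-- The principal part `(y³ + x²y, x³ + xy²) = (x² + y²) • (y, x)`. -/
def principalField (p : ℝ × ℝ) : ℝ × ℝ := (p.2 ^ 3 + p.1 ^ 2 * p.2, p.1 ^ 3 + p.1 * p.2 ^ 2)

/-- A perturbation `P` vanishing to fourth order at the origin in the Lipschitz sense, together with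
a radius `r` so small that the principal part dominates `P` on the ball of radius `r`. -/
structure IsQuarticRemainder (P : ℝ × ℝ → ℝ × ℝ) (M : ℝ≥0) (r : ℝ) : Prop where
  map_zero : P 0 = 0
  lipschitzOnWith : ∀ ρ : ℝ≥0, ρ ≤ r → LipschitzOnWith (M * ρ ^ 3) P (Metric.closedBall 0 ρ)
  le_one : r ≤ 1
  mul_le : M * r ≤ 1 / 8

/-- The derivative of `x + y` along `principalField + P`. -/
def radialSpeed (P : ℝ × ℝ → ℝ × ℝ) (p : ℝ × ℝ) : ℝ :=
  (p.1 + p.2) * (p.1 ^ 2 + p.2 ^ 2) + (P p).1 + (P p).2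

/-- The derivative of `x² - y²`, a first integral of `principalField`, along
`principalField + P`. -/
def labelSpeed (P : ℝ × ℝ → ℝ × ℝ) (p : ℝ × ℝ) : ℝ := 2 * (p.1 * (P p).1 - p.2 * (P p).2)

/-- The slope `dζ/dξ` of the orbits of `principalField + P` in the radius and label coordinates. -/
noncomputable def coneSlope (P : ℝ × ℝ → ℝ × ℝ) (ξ ζ : ℝ) : ℝ :=
  labelSpeed P (conePoint ξ (clampAbs (ξ ^ 2) ζ)) / radialSpeed P (conePoint ξ (clampAbs (ξ ^ 2) ζ))

variable {P : ℝ × ℝ → ℝ × ℝ} {M : ℝ≥0} {r ξ ζ ζ' : ℝ} {p p' : ℝ × ℝ}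

theorem norm_le_fst_add_snd (hp : 0 ≤ p) : ‖p‖ ≤ p.1 + p.2 := by
  obtain ⟨hx, hy⟩ : 0 ≤ p.1 ∧ 0 ≤ p.2 := hp
  rw [Prod.norm_def, Real.norm_of_nonneg hx, Real.norm_of_nonneg hy]
  exact max_le (le_add_of_nonneg_right hy) (le_add_of_nonneg_left hx)

theorem quadrantTriangle_subset_closedBall : quadrantTriangle r ⊆ Metric.closedBall 0 r :=
  fun _ hp => mem_closedBall_zero_iff.2 ((norm_le_fst_add_snd hp.1).trans hp.2)

theorem conePoint_clampAbs_mem (hξ : ξ ∈ Icc 0 r) (ζ : ℝ) :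
    conePoint ξ (clampAbs (ξ ^ 2) ζ) ∈ quadrantTriangle r :=
  conePoint_mem_quadrantTriangle hξ (abs_clampAbs_le (sq_nonneg ξ) ζ)

theorem abs_mul_sub_mul_le (x x' u u' : ℝ) :
    |x * u - x' * u'| ≤ |x - x'| * |u| + |x'| * |u - u'| := by
  rw [← abs_mul, ← abs_mul, show x * u - x' * u' = (x - x') * u + x' * (u - u') by ring]
  exact abs_add_le _ _

namespace IsQuarticRemainder

theorem norm_sub_le (hP : IsQuarticRemainder P M r) (hξ : ξ ≤ r) (hp : ‖p‖ ≤ ξ) (hp' : ‖p'‖ ≤ ξ) :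
    ‖P p - P p'‖ ≤ M * ξ ^ 3 * ‖p - p'‖ := by
  lift ξ to ℝ≥0 using (norm_nonneg p).trans hp
  simpa only [dist_eq_norm, NNReal.coe_mul, NNReal.coe_pow] using
    (hP.lipschitzOnWith ξ hξ).dist_le_mul p (mem_closedBall_zero_iff.2 hp) p'
      (mem_closedBall_zero_iff.2 hp')

theorem norm_le (hP : IsQuarticRemainder P M r) (hξ : ξ ≤ r) (hp : ‖p‖ ≤ ξ) :
    ‖P p‖ ≤ M * ξ ^ 4 := by
  have hξ₀ : 0 ≤ ξ := (norm_nonneg p).trans hp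
  have hle := hP.norm_sub_le hξ hp (norm_zero.trans_le hξ₀)
  rw [hP.map_zero, sub_zero, sub_zero] at hle
  calc ‖P p‖ ≤ M * ξ ^ 3 * ‖p‖ := hle
    _ ≤ M * ξ ^ 3 * ξ := by gcongr
    _ = M * ξ ^ 4 := by ring

theorem continuousOn (hP : IsQuarticRemainder P M r) : ContinuousOn P (Metric.closedBall 0 r) := by
  rcases lt_or_ge r 0 with hr | hr
  · rw [Metric.closedBall_eq_empty.2 hr]
    exact continuousOn_empty P
  · lift r to ℝ≥0 using hr
    exact (hP.lipschitzOnWith r le_rfl).continuousOn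

theorem mul_le_of_le (hP : IsQuarticRemainder P M r) (hξ : ξ ≤ r) : M * ξ ≤ 1 / 8 :=
  (mul_le_mul_of_nonneg_left hξ M.2).trans hP.mul_le

theorem continuousOn_quadrantTriangle (hP : IsQuarticRemainder P M r) :
    ContinuousOn P (quadrantTriangle r) :=
  hP.continuousOn.mono quadrantTriangle_subset_closedBall

theorem continuousOn_radialSpeed (hP : IsQuarticRemainder P M r) :
    ContinuousOn (radialSpeed P) (quadrantTriangle r) := by
  have := hP.continuousOn_quadrantTriangle
  unfold radialSpeed
  fun_prop

theorem continuousOn_labelSpeed (hP : IsQuarticRemainder P M r) :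
    ContinuousOn (labelSpeed P) (quadrantTriangle r) := by
  have := hP.continuousOn_quadrantTriangle
  unfold labelSpeed
  fun_prop

theorem abs_radialSpeed_sub_le (hP : IsQuarticRemainder P M r) (hp : p ∈ quadrantTriangle r) :
    |radialSpeed P p - (p.1 + p.2) * (p.1 ^ 2 + p.2 ^ 2)| ≤ (p.1 + p.2) ^ 3 / 4 := by
  have hcube : 0 ≤ (p.1 + p.2) ^ 3 := pow_nonneg (add_nonneg hp.1.1 hp.1.2) 3
  have hnorm := hP.norm_le hp.2 (norm_le_fst_add_snd hp.1)
  have hperturb := mul_le_mul_of_nonneg_right (hP.mul_le_of_le hp.2) hcube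
  have heq : radialSpeed P p - (p.1 + p.2) * (p.1 ^ 2 + p.2 ^ 2) = (P p).1 + (P p).2 := by
    rw [radialSpeed]
    ring
  rw [heq]
  calc |(P p).1 + (P p).2| ≤ ‖(P p).1‖ + ‖(P p).2‖ := abs_add_le _ _
    _ ≤ M * (p.1 + p.2) ^ 4 + M * (p.1 + p.2) ^ 4 :=
      add_le_add ((norm_fst_le _).trans hnorm) ((norm_snd_le _).trans hnorm)
    _ ≤ (p.1 + p.2) ^ 3 / 4 := by linarith

theorem le_radialSpeed (hP : IsQuarticRemainder P M r) (hp : p ∈ quadrantTriangle r) :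
    (p.1 + p.2) ^ 3 / 4 ≤ radialSpeed P p := by
  have hsum : 0 ≤ p.1 + p.2 := add_nonneg hp.1.1 hp.1.2
  have hmain : 0 ≤ (p.1 + p.2) * (p.1 - p.2) ^ 2 := mul_nonneg hsum (sq_nonneg _)
  linarith [(abs_le.1 (hP.abs_radialSpeed_sub_le hp)).1]

theorem radialSpeed_pos (hP : IsQuarticRemainder P M r) (hp : p ∈ quadrantTriangle r)
    (hpos : 0 < p.1 + p.2) : 0 < radialSpeed P p :=
  (div_pos (pow_pos hpos 3) four_pos).trans_le (hP.le_radialSpeed hp)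

theorem radialSpeed_le_two (hP : IsQuarticRemainder P M r) (hp : p ∈ quadrantTriangle r) :
    radialSpeed P p ≤ 2 := by
  have hx : 0 ≤ p.1 := hp.1.1
  have hy : 0 ≤ p.2 := hp.1.2
  have hcube : (p.1 + p.2) ^ 3 ≤ 1 := pow_le_one₀ (add_nonneg hx hy) (hp.2.trans hP.le_one)
  have hmain : 0 ≤ (p.1 + p.2) * (p.1 * p.2) := mul_nonneg (add_nonneg hx hy) (mul_nonneg hx hy)
  linarith [(abs_le.1 (hP.abs_radialSpeed_sub_le hp)).2]

theorem abs_labelSpeed_le (hP : IsQuarticRemainder P M r) (hp : p ∈ quadrantTriangle r) :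
    |labelSpeed P p| ≤ 2 * M * (p.1 + p.2) ^ 5 := by
  have hx : 0 ≤ p.1 := hp.1.1
  have hy : 0 ≤ p.2 := hp.1.2
  have hnorm := hP.norm_le hp.2 (norm_le_fst_add_snd hp.1)
  calc |labelSpeed P p| = 2 * |p.1 * (P p).1 - p.2 * (P p).2| := by
        rw [labelSpeed, abs_mul, abs_two]
    _ ≤ 2 * (p.1 * ‖(P p).1‖ + p.2 * ‖(P p).2‖) := by
        refine mul_le_mul_of_nonneg_left ((abs_sub _ _).trans_eq ?_) zero_le_two
        rw [abs_mul, abs_mul, abs_of_nonneg hx, abs_of_nonneg hy, Real.norm_eq_abs,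
          Real.norm_eq_abs]
    _ ≤ 2 * (p.1 * (M * (p.1 + p.2) ^ 4) + p.2 * (M * (p.1 + p.2) ^ 4)) := by
        gcongr
        exacts [(norm_fst_le _).trans hnorm, (norm_snd_le _).trans hnorm]
    _ = 2 * M * (p.1 + p.2) ^ 5 := by ring

theorem abs_slope_le (hP : IsQuarticRemainder P M r) (hp : p ∈ quadrantTriangle r) :
    |labelSpeed P p / radialSpeed P p| ≤ 8 * M * (p.1 + p.2) ^ 2 := by
  have hsum : 0 ≤ p.1 + p.2 := add_nonneg hp.1.1 hp.1.2
  have hle := hP.le_radialSpeed hp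
  have hnonneg : 0 ≤ radialSpeed P p := (by positivity : 0 ≤ (p.1 + p.2) ^ 3 / 4).trans hle
  rw [abs_div, abs_of_nonneg hnonneg]
  refine div_le_of_le_mul₀ hnonneg (by positivity) ((hP.abs_labelSpeed_le hp).trans ?_)
  calc 2 * M * (p.1 + p.2) ^ 5 = 8 * M * (p.1 + p.2) ^ 2 * ((p.1 + p.2) ^ 3 / 4) := by ring
    _ ≤ 8 * M * (p.1 + p.2) ^ 2 * radialSpeed P p := by gcongr

theorem abs_coneSlope_le (hP : IsQuarticRemainder P M r) (hξ : ξ ∈ Icc 0 r) (ζ : ℝ) :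
    |coneSlope P ξ ζ| ≤ ξ := by
  have hle := hP.abs_slope_le (conePoint_clampAbs_mem hξ ζ)
  rw [conePoint_fst_add_snd] at hle
  calc |coneSlope P ξ ζ| ≤ 8 * (M * ξ) * ξ := hle.trans_eq (by ring)
    _ ≤ 8 * (1 / 8) * ξ := by
      have := hξ.1
      gcongr
      exact hP.mul_le_of_le hξ.2
    _ = ξ := by ring

theorem abs_labelSpeed_sub_le (hP : IsQuarticRemainder P M r) (hp : p ∈ quadrantTriangle r)
    (hp' : p' ∈ quadrantTriangle r) (hsum : p'.1 + p'.2 = p.1 + p.2) :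
    |labelSpeed P p - labelSpeed P p'| ≤ 6 * M * (p.1 + p.2) ^ 4 * ‖p - p'‖ := by
  have hx : 0 ≤ p'.1 := hp'.1.1
  have hy : 0 ≤ p'.2 := hp'.1.2
  have hball := norm_le_fst_add_snd hp.1
  have hnorm := hP.norm_le hp.2 hball
  have hsub := hP.norm_sub_le hp.2 hball (hsum ▸ norm_le_fst_add_snd hp'.1)
  have hfst : |p.1 * (P p).1 - p'.1 * (P p').1| ≤ ‖p - p'‖ * (M * (p.1 + p.2) ^ 4) +
      p'.1 * (M * (p.1 + p.2) ^ 3 * ‖p - p'‖) := by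
    refine (abs_mul_sub_mul_le _ _ _ _).trans ?_
    rw [abs_of_nonneg hx]
    gcongr
    exacts [norm_fst_le (p - p'), (norm_fst_le _).trans hnorm,
      (norm_fst_le (P p - P p')).trans hsub]
  have hsnd : |p.2 * (P p).2 - p'.2 * (P p').2| ≤ ‖p - p'‖ * (M * (p.1 + p.2) ^ 4) +
      p'.2 * (M * (p.1 + p.2) ^ 3 * ‖p - p'‖) := by
    refine (abs_mul_sub_mul_le _ _ _ _).trans ?_
    rw [abs_of_nonneg hy]
    gcongr
    exacts [norm_snd_le (p - p'), (norm_snd_le _).trans hnorm,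
      (norm_snd_le (P p - P p')).trans hsub]
  calc |labelSpeed P p - labelSpeed P p'|
      = 2 * |(p.1 * (P p).1 - p'.1 * (P p').1) - (p.2 * (P p).2 - p'.2 * (P p').2)| := by
        rw [show labelSpeed P p - labelSpeed P p' =
          2 * ((p.1 * (P p).1 - p'.1 * (P p').1) - (p.2 * (P p).2 - p'.2 * (P p').2)) by
            rw [labelSpeed, labelSpeed]; ring, abs_mul, abs_two]
    _ ≤ 2 * (4 * M * (p.1 + p.2) ^ 4 * ‖p - p'‖ - M * (p.1 + p.2) ^ 4 * ‖p - p'‖) := by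
        refine mul_le_mul_of_nonneg_left ((abs_sub _ _).trans ((add_le_add hfst hsnd).trans_eq ?_))
          zero_le_two
        linear_combination M * (p.1 + p.2) ^ 3 * ‖p - p'‖ * hsum
    _ = 6 * M * (p.1 + p.2) ^ 4 * ‖p - p'‖ := by ring

theorem abs_radialSpeed_sub_radialSpeed_le (hP : IsQuarticRemainder P M r)
    (hp : p ∈ quadrantTriangle r) (hp' : p' ∈ quadrantTriangle r)
    (hsum : p'.1 + p'.2 = p.1 + p.2) :
    |radialSpeed P p - radialSpeed P p'| ≤ 3 * (p.1 + p.2) ^ 2 * ‖p - p'‖ := by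
  obtain ⟨⟨hx, hy⟩, hr⟩ := hp
  obtain ⟨⟨hx', hy'⟩, -⟩ := hp'
  simp only [Prod.fst_zero, Prod.snd_zero] at hx hy hx' hy'
  have hξ : 0 ≤ p.1 + p.2 := add_nonneg hx hy
  have hsub := hP.norm_sub_le hr (norm_le_fst_add_snd ⟨hx, hy⟩)
    (hsum ▸ norm_le_fst_add_snd (p := p') ⟨hx', hy'⟩)
  have hfst : |(p.1 + p.2) * (p.1 ^ 2 - p'.1 ^ 2)| ≤
      (p.1 + p.2) * ((p.1 + p'.1) * ‖p - p'‖) := by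
    rw [sq_sub_sq, abs_mul, abs_mul, abs_of_nonneg hξ, abs_of_nonneg (add_nonneg hx hx')]
    gcongr
    exact norm_fst_le (p - p')
  have hsnd : |(p.1 + p.2) * (p.2 ^ 2 - p'.2 ^ 2)| ≤
      (p.1 + p.2) * ((p.2 + p'.2) * ‖p - p'‖) := by
    rw [sq_sub_sq, abs_mul, abs_mul, abs_of_nonneg hξ, abs_of_nonneg (add_nonneg hy hy')]
    gcongr
    exact norm_snd_le (p - p')
  have hperturb : (M * (p.1 + p.2) ^ 3) * ‖p - p'‖ ≤ (p.1 + p.2) ^ 2 / 2 * ‖p - p'‖ := by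
    refine mul_le_mul_of_nonneg_right ?_ (norm_nonneg _)
    linarith [mul_le_mul_of_nonneg_right (hP.mul_le_of_le hr) (sq_nonneg (p.1 + p.2)),
      sq_nonneg (p.1 + p.2)]
  have hmain := (abs_add_le _ _).trans (add_le_add hfst hsnd)
  have hrest : |(P p - P p').1 + (P p - P p').2| ≤ (p.1 + p.2) ^ 2 * ‖p - p'‖ := by
    have hnorm := hsub.trans hperturb
    refine (abs_add_le _ _).trans ?_
    refine (add_le_add ((norm_fst_le (P p - P p')).trans hnorm)
      ((norm_snd_le (P p - P p')).trans hnorm)).trans_eq (by ring)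
  have hsplit : radialSpeed P p - radialSpeed P p' = (p.1 + p.2) * (p.1 ^ 2 - p'.1 ^ 2) +
      (p.1 + p.2) * (p.2 ^ 2 - p'.2 ^ 2) + ((P p - P p').1 + (P p - P p').2) := by
    rw [radialSpeed, radialSpeed, hsum, Prod.fst_sub, Prod.snd_sub]
    ring
  rw [hsplit]
  refine ((abs_add_le _ _).trans (add_le_add hmain hrest)).trans_eq ?_
  linear_combination (p.1 + p.2) * ‖p - p'‖ * hsum

theorem abs_slope_sub_le (hP : IsQuarticRemainder P M r) (hp : p ∈ quadrantTriangle r)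
    (hp' : p' ∈ quadrantTriangle r) (hsum : p'.1 + p'.2 = p.1 + p.2) (hpos : 0 < p.1 + p.2) :
    |labelSpeed P p / radialSpeed P p - labelSpeed P p' / radialSpeed P p'| ≤
      120 * M * (p.1 + p.2) * ‖p - p'‖ := by
  have hS := hP.radialSpeed_pos hp hpos
  have hS' := hP.radialSpeed_pos hp' (hsum ▸ hpos)
  have hslope := hP.abs_slope_le hp'
  rw [hsum] at hslope
  have hsplit : labelSpeed P p / radialSpeed P p - labelSpeed P p' / radialSpeed P p' =
      ((labelSpeed P p - labelSpeed P p') -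
        labelSpeed P p' / radialSpeed P p' * (radialSpeed P p - radialSpeed P p')) /
          radialSpeed P p := by
    field_simp
    ring
  rw [hsplit, abs_div, abs_of_pos hS, div_le_iff₀ hS]
  calc _ ≤ |labelSpeed P p - labelSpeed P p'| +
        |labelSpeed P p' / radialSpeed P p'| * |radialSpeed P p - radialSpeed P p'| :=
        (abs_sub _ _).trans_eq (by rw [abs_mul])
    _ ≤ 6 * M * (p.1 + p.2) ^ 4 * ‖p - p'‖ +
        8 * M * (p.1 + p.2) ^ 2 * (3 * (p.1 + p.2) ^ 2 * ‖p - p'‖) := by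
        gcongr
        exacts [hP.abs_labelSpeed_sub_le hp hp' hsum,
          hP.abs_radialSpeed_sub_radialSpeed_le hp hp' hsum]
    _ = 120 * M * (p.1 + p.2) * ‖p - p'‖ * ((p.1 + p.2) ^ 3 / 4) := by ring
    _ ≤ 120 * M * (p.1 + p.2) * ‖p - p'‖ * radialSpeed P p := by
        gcongr
        exact hP.le_radialSpeed hp

theorem lipschitzWith_coneSlope (hP : IsQuarticRemainder P M r) (hξ : ξ ∈ Icc 0 r) :
    LipschitzWith (60 * M) (coneSlope P ξ) := by
  refine LipschitzWith.of_dist_le_mul fun ζ ζ' => ?_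
  rw [Real.dist_eq, Real.dist_eq, NNReal.coe_mul, NNReal.coe_ofNat]
  rcases hξ.1.eq_or_lt with hzero | hpos
  · have hle := hP.abs_coneSlope_le hξ
    rw [← hzero] at hle ⊢
    rw [abs_nonpos_iff.1 (hle ζ), abs_nonpos_iff.1 (hle ζ'), sub_zero, abs_zero]
    positivity
  · have hle := hP.abs_slope_sub_le (conePoint_clampAbs_mem hξ ζ) (conePoint_clampAbs_mem hξ ζ')
      ((conePoint_fst_add_snd _ _).trans (conePoint_fst_add_snd _ _).symm)
      (hpos.trans_eq (conePoint_fst_add_snd _ _).symm)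
    rw [conePoint_fst_add_snd, norm_conePoint_sub hpos] at hle
    calc |coneSlope P ξ ζ - coneSlope P ξ ζ'|
        ≤ 120 * M * ξ * (|clampAbs (ξ ^ 2) ζ - clampAbs (ξ ^ 2) ζ'| / (2 * ξ)) := hle
      _ = 60 * M * |clampAbs (ξ ^ 2) ζ - clampAbs (ξ ^ 2) ζ'| := by
        field_simp
        ring
      _ ≤ 60 * M * |ζ - ζ'| := by
        exact mul_le_mul_of_nonneg_left (abs_clampAbs_sub_le _ _ _) (by positivity)

theorem continuousOn_coneSlope (hP : IsQuarticRemainder P M r) (ζ : ℝ) :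
    ContinuousOn (coneSlope P · ζ) (Icc 0 r) := by
  intro ξ hξ
  rcases hξ.1.eq_or_lt with hzero | hpos
  · subst hzero
    have hvalue : coneSlope P 0 ζ = 0 := abs_nonpos_iff.1 (hP.abs_coneSlope_le hξ ζ)
    rw [ContinuousWithinAt, hvalue]
    refine squeeze_zero_norm' (a := id) ?_ (continuous_id.continuousWithinAt)
    filter_upwards [self_mem_nhdsWithin] with ξ hξ using hP.abs_coneSlope_le hξ ζ
  · have hpoint : ContinuousOn (fun ξ => conePoint ξ (clampAbs (ξ ^ 2) ζ)) (Icc 0 r) :=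
      continuousOn_conePoint.comp (f := fun ξ => (ξ, clampAbs (ξ ^ 2) ζ))
        (continuous_id.prodMk (continuous_clampAbs.comp
          ((continuous_pow 2).prodMk continuous_const))).continuousOn
        fun ξ hξ => ⟨hξ.1, abs_clampAbs_le (sq_nonneg ξ) ζ⟩
    have hne : radialSpeed P (conePoint ξ (clampAbs (ξ ^ 2) ζ)) ≠ 0 :=
      (hP.radialSpeed_pos (conePoint_clampAbs_mem hξ ζ)
        (hpos.trans_eq (conePoint_fst_add_snd _ _).symm)).ne'
    have hmem : MapsTo _ (Icc 0 r) (quadrantTriangle r) := fun ξ hξ => conePoint_clampAbs_mem hξ ζ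
    exact (hP.continuousOn_labelSpeed.comp hpoint hmem ξ hξ).div
      (hP.continuousOn_radialSpeed.comp hpoint hmem ξ hξ) hne

theorem isConeSlope (hP : IsQuarticRemainder P M r) : IsConeSlope (coneSlope P) r (60 * M) where
  lipschitzWith _ := hP.lipschitzWith_coneSlope
  continuousOn := hP.continuousOn_coneSlope
  abs_apply_le _ := hP.abs_coneSlope_le

end IsQuarticRemainder

end ConeSlope

/-! ### Straightening a quadrant -/

section QuadrantMaps

theorem continuousOn_invFunOn_image {X Y : Type*} [TopologicalSpace X] [Nonempty X]
    [TopologicalSpace Y] [T2Space Y] {f : X → Y} {K : Set X} (hK : IsCompact K)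
    (hf : ContinuousOn f K) (hinj : InjOn f K) :
    ContinuousOn (Function.invFunOn f K) (f '' K) := by
  have hleft : LeftInvOn (Function.invFunOn f K) f K := hinj.leftInvOn_invFunOn
  refine continuousOn_iff_isClosed.2 fun t ht => ⟨f '' (K ∩ t),
    ((hK.inter_right ht).image_of_continuousOn (hf.mono inter_subset_left)).isClosed, ?_⟩
  ext y
  constructor
  · rintro ⟨hy, x, hx, rfl⟩
    exact ⟨mem_image_of_mem f ⟨hx, hleft hx ▸ hy⟩, mem_image_of_mem f hx⟩
  · rintro ⟨⟨x, ⟨hx, hxt⟩, rfl⟩, hy⟩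
    exact ⟨mem_preimage.2 ((hleft hx).symm ▸ hxt), hy⟩

/-- A continuous map of the triangle of size `r` that preserves `x + y` and fixes the two legs;
such maps of the four quadrants fit together along the axes. -/
structure IsQuadrantMap (r : ℝ) (Q : ℝ × ℝ → ℝ × ℝ) : Prop where
  continuousOn : ContinuousOn Q (quadrantTriangle r)
  nonneg : ∀ p ∈ quadrantTriangle r, 0 ≤ Q p
  fst_add_snd : ∀ p ∈ quadrantTriangle r, (Q p).1 + (Q p).2 = p.1 + p.2
  eq_self : ∀ p ∈ quadrantTriangle r, p.1 = 0 ∨ p.2 = 0 → Q p = p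

/-- The map of the first quadrant that carries the points with labels constantly equal to `h` to
the leaf labelled `h` of `principalField + P`. -/
noncomputable def chart (P : ℝ × ℝ → ℝ × ℝ) (r : ℝ) (p : ℝ × ℝ) : ℝ × ℝ :=
  conePoint (p.1 + p.2) (leaf (coneSlope P) r (p.1 ^ 2 - p.2 ^ 2) (p.1 + p.2))

/-- The map of the first quadrant that carries the leaves of `principalField + P` to the leaves of
`principalField + P'` with the same labels. -/
noncomputable def leafTransfer (P P' : ℝ × ℝ → ℝ × ℝ) (r : ℝ) (p : ℝ × ℝ) : ℝ × ℝ :=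
  chart P' r (Function.invFunOn (chart P r) (quadrantTriangle r) p)

variable {P P' : ℝ × ℝ → ℝ × ℝ} {Q Q' : ℝ × ℝ → ℝ × ℝ} {M M' : ℝ≥0} {r ξ h : ℝ} {p : ℝ × ℝ}

theorem fst_add_snd_mem_Icc (hp : p ∈ quadrantTriangle r) : p.1 + p.2 ∈ Icc 0 r :=
  ⟨add_nonneg hp.1.1 hp.1.2, hp.2⟩

theorem isCompact_quadrantTriangle (r : ℝ) : IsCompact (quadrantTriangle r) :=
  (isCompact_closedBall (0 : ℝ × ℝ) r).of_isClosed_subset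
    (isClosed_Ici.inter (isClosed_le (continuous_fst.add continuous_snd) continuous_const))
    quadrantTriangle_subset_closedBall

namespace IsQuadrantMap

theorem mapsTo (hQ : IsQuadrantMap r Q) : MapsTo Q (quadrantTriangle r) (quadrantTriangle r) :=
  fun p hp => ⟨hQ.nonneg p hp, (hQ.fst_add_snd p hp).trans_le hp.2⟩

theorem comp (hQ' : IsQuadrantMap r Q') (hQ : IsQuadrantMap r Q) : IsQuadrantMap r (Q' ∘ Q) where
  continuousOn := hQ'.continuousOn.comp hQ.continuousOn hQ.mapsTo
  nonneg p hp := hQ'.nonneg (Q p) (hQ.mapsTo hp)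
  fst_add_snd p hp := (hQ'.fst_add_snd (Q p) (hQ.mapsTo hp)).trans (hQ.fst_add_snd p hp)
  eq_self p hp haxis := by
    rw [Function.comp_apply, hQ.eq_self p hp haxis, hQ'.eq_self p hp haxis]

theorem invFunOn (hQ : IsQuadrantMap r Q)
    (hbij : BijOn Q (quadrantTriangle r) (quadrantTriangle r)) :
    IsQuadrantMap r (Function.invFunOn Q (quadrantTriangle r)) := by
  have hinv := hbij.invOn_invFunOn
  have hmaps := hbij.surjOn.mapsTo_invFunOn
  refine ⟨?_, fun p hp => (hmaps hp).1, fun p hp => ?_, fun p hp haxis => ?_⟩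
  · have hcont := continuousOn_invFunOn_image (isCompact_quadrantTriangle r) hQ.continuousOn
      hbij.injOn
    rwa [hbij.image_eq] at hcont
  · rw [← hQ.fst_add_snd _ (hmaps hp), hinv.2 hp]
  · have hleft := hinv.1 hp
    rwa [hQ.eq_self p hp haxis] at hleft

end IsQuadrantMap

theorem chart_conePoint (hh : |h| ≤ ξ ^ 2) :
    chart P r (conePoint ξ h) = conePoint ξ (leaf (coneSlope P) r h ξ) := by
  rw [chart, conePoint_fst_add_snd, conePoint_sq_sub_sq hh]

theorem IsQuarticRemainder.abs_leaf_label_le (hP : IsQuarticRemainder P M r)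
    (hp : p ∈ quadrantTriangle r) :
    |leaf (coneSlope P) r (p.1 ^ 2 - p.2 ^ 2) (p.1 + p.2)| ≤ (p.1 + p.2) ^ 2 :=
  abs_leaf_le_sq hP.isConeSlope (fst_add_snd_mem_Icc hp) (abs_sq_sub_sq_le hp.1)

theorem IsQuarticRemainder.isQuadrantMap_chart (hP : IsQuarticRemainder P M r) :
    IsQuadrantMap r (chart P r) where
  continuousOn := by
    refine continuousOn_conePoint.comp (f := fun p =>
      (p.1 + p.2, leaf (coneSlope P) r (p.1 ^ 2 - p.2 ^ 2) (p.1 + p.2)))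
      (.prodMk (by fun_prop) ?_) fun p hp =>
        ⟨(fst_add_snd_mem_Icc hp).1, hP.abs_leaf_label_le hp⟩
    exact (continuousOn_leaf hP.isConeSlope).comp
      (f := fun p : ℝ × ℝ => (p.1 ^ 2 - p.2 ^ 2, p.1 + p.2)) (by fun_prop) fun p hp =>
        ⟨abs_le_sq_of_mem_Icc (fst_add_snd_mem_Icc hp) (abs_sq_sub_sq_le hp.1),
          fst_add_snd_mem_Icc hp⟩
  nonneg _ hp := conePoint_nonneg (fst_add_snd_mem_Icc hp).1 (hP.abs_leaf_label_le hp)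
  fst_add_snd _ _ := conePoint_fst_add_snd _ _
  eq_self p hp haxis := by
    have hlabel : |p.1 ^ 2 - p.2 ^ 2| = (p.1 + p.2) ^ 2 := by
      rcases haxis with h | h <;> simp [h]
    rw [chart, leaf_eq_self hP.isConeSlope (fst_add_snd_mem_Icc hp) hlabel,
      conePoint_add_sq_sub_sq hp.1]

theorem IsQuarticRemainder.bijOn_chart (hP : IsQuarticRemainder P M r) :
    BijOn (chart P r) (quadrantTriangle r) (quadrantTriangle r) := by
  refine ⟨hP.isQuadrantMap_chart.mapsTo, fun p hp q hq heq => ?_, fun p hp => ?_⟩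
  · have hsum : p.1 + p.2 = q.1 + q.2 := by
      simpa only [chart, conePoint_fst_add_snd] using congrArg (fun z => z.1 + z.2) heq
    have hleaf := (conePoint_sq_sub_sq (hP.abs_leaf_label_le hp)).symm.trans
      ((congrArg (fun z => z.1 ^ 2 - z.2 ^ 2) heq).trans
        (conePoint_sq_sub_sq (hP.abs_leaf_label_le hq)))
    rw [← hsum] at hleaf
    have hlabel := eq_of_leaf_eq hP.isConeSlope (fst_add_snd_mem_Icc hp)
      (abs_le_sq_of_mem_Icc (fst_add_snd_mem_Icc hp) (abs_sq_sub_sq_le hp.1))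
      (abs_le_sq_of_mem_Icc (fst_add_snd_mem_Icc hq) (abs_sq_sub_sq_le hq.1)) hleaf
    rw [← conePoint_add_sq_sub_sq hp.1, ← conePoint_add_sq_sub_sq hq.1, hsum, hlabel]
  · have hξ := fst_add_snd_mem_Icc hp
    obtain ⟨h, hh, hleaf⟩ := exists_leaf_eq hP.isConeSlope hξ (abs_sq_sub_sq_le hp.1)
    refine ⟨conePoint (p.1 + p.2) h, conePoint_mem_quadrantTriangle hξ hh, ?_⟩
    rw [chart_conePoint hh, hleaf, conePoint_add_sq_sub_sq hp.1]

theorem IsQuarticRemainder.leafTransfer_conePoint_leaf (hP : IsQuarticRemainder P M r)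
    (hξ : ξ ∈ Icc 0 r) (hh : |h| ≤ ξ ^ 2) :
    leafTransfer P P' r (conePoint ξ (leaf (coneSlope P) r h ξ)) =
      conePoint ξ (leaf (coneSlope P') r h ξ) := by
  rw [leafTransfer, ← chart_conePoint hh,
    hP.bijOn_chart.invOn_invFunOn.1 (conePoint_mem_quadrantTriangle hξ hh), chart_conePoint hh]

theorem IsQuarticRemainder.isQuadrantMap_leafTransfer (hP : IsQuarticRemainder P M r)
    (hP' : IsQuarticRemainder P' M' r) : IsQuadrantMap r (leafTransfer P P' r) :=
  hP'.isQuadrantMap_chart.comp (hP.isQuadrantMap_chart.invFunOn hP.bijOn_chart)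

theorem IsQuarticRemainder.leftInvOn_leafTransfer (hP : IsQuarticRemainder P M r)
    (hP' : IsQuarticRemainder P' M' r) :
    LeftInvOn (leafTransfer P' P r) (leafTransfer P P' r) (quadrantTriangle r) := fun p hp => by
  have hmem := hP.bijOn_chart.surjOn.mapsTo_invFunOn hp
  rw [leafTransfer, leafTransfer, hP'.bijOn_chart.invOn_invFunOn.1 hmem,
    hP.bijOn_chart.invOn_invFunOn.2 hp]

end QuadrantMaps

/-! ### Gluing the four quadrants -/

section Gluing

/-- The closed ball of radius `r` for the norm `|x| + |y|`. -/
def closedDiamond (r : ℝ) : Set (ℝ × ℝ) := {p | |p.1| + |p.2| ≤ r}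

/-- A vector `s` of signs such that `s * p` lies in the closed first quadrant. The quadrants are
indexed by the `s : ℝ × ℝ` with `s * s = 1`, which act on the plane by multiplication. -/
noncomputable def quadrantSign (p : ℝ × ℝ) : ℝ × ℝ :=
  (if 0 ≤ p.1 then 1 else -1, if 0 ≤ p.2 then 1 else -1)

/-- The map of the plane that acts on the quadrant `s` as the conjugate of `Q s` by `s`. -/
noncomputable def glueQuadrants (Q : ℝ × ℝ → ℝ × ℝ → ℝ × ℝ) (p : ℝ × ℝ) : ℝ × ℝ :=
  quadrantSign p * Q (quadrantSign p) (quadrantSign p * p)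

variable {r : ℝ} {s s' p : ℝ × ℝ} {Q Q' : ℝ × ℝ → ℝ × ℝ → ℝ × ℝ}

theorem quadrantSign_mul_self (p : ℝ × ℝ) : quadrantSign p * quadrantSign p = 1 := by
  ext <;> simp only [quadrantSign, Prod.fst_mul, Prod.snd_mul] <;> split_ifs <;> norm_num

theorem quadrantSign_mul_nonneg (p : ℝ × ℝ) : 0 ≤ quadrantSign p * p := by
  refine ⟨?_, ?_⟩ <;> simp only [quadrantSign, Prod.fst_mul, Prod.snd_mul] <;> split_ifs with h <;>
    simp only [Prod.fst_zero, Prod.snd_zero] <;> linarith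

theorem eq_or_eq_neg_of_mul_self_eq_one (hs : s * s = 1) :
    (s.1 = 1 ∨ s.1 = -1) ∧ (s.2 = 1 ∨ s.2 = -1) :=
  ⟨mul_self_eq_one_iff.1 (congrArg Prod.fst hs), mul_self_eq_one_iff.1 (congrArg Prod.snd hs)⟩

theorem mul_mul_cancel_of_mul_self_eq_one (hs : s * s = 1) (p : ℝ × ℝ) : s * (s * p) = p := by
  rw [← mul_assoc, hs, one_mul]

theorem abs_fst_add_abs_snd_mul (hs : s * s = 1) (p : ℝ × ℝ) :
    |(s * p).1| + |(s * p).2| = |p.1| + |p.2| := by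
  obtain ⟨h₁ | h₁, h₂ | h₂⟩ := eq_or_eq_neg_of_mul_self_eq_one hs <;> simp [h₁, h₂]

theorem fst_add_snd_mul_eq (hs : s * s = 1) (hp : 0 ≤ s * p) :
    (s * p).1 + (s * p).2 = |p.1| + |p.2| := by
  rw [← abs_fst_add_abs_snd_mul hs, abs_of_nonneg hp.1, abs_of_nonneg hp.2]

theorem mul_mem_quadrantTriangle (hs : s * s = 1) (hp : 0 ≤ s * p) (hr : p ∈ closedDiamond r) :
    s * p ∈ quadrantTriangle r :=
  ⟨hp, (fst_add_snd_mul_eq hs hp).trans_le hr⟩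

theorem sign_eq_of_mul_nonneg {a b x : ℝ} (ha : a = 1 ∨ a = -1) (hb : b = 1 ∨ b = -1) (hx : x ≠ 0)
    (hax : 0 ≤ a * x) (hbx : 0 ≤ b * x) : a = b := by
  rcases ha with rfl | rfl <;> rcases hb with rfl | rfl <;>
    first | rfl | exact (hx (by linarith)).elim

theorem fst_eq_zero_or_snd_eq_zero (hs : s * s = 1) (hs' : s' * s' = 1) (hp : 0 ≤ s * p)
    (hp' : 0 ≤ s' * p) (hne : s ≠ s') : p.1 = 0 ∨ p.2 = 0 := by
  by_contra! h
  obtain ⟨h₁, h₂⟩ := eq_or_eq_neg_of_mul_self_eq_one hs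
  obtain ⟨h₁', h₂'⟩ := eq_or_eq_neg_of_mul_self_eq_one hs'
  exact hne (Prod.ext (sign_eq_of_mul_nonneg h₁ h₁' h.1 hp.1 hp'.1)
    (sign_eq_of_mul_nonneg h₂ h₂' h.2 hp.2 hp'.2))

theorem mul_eq_self_of_axis {f : ℝ × ℝ → ℝ × ℝ} (hf : IsQuadrantMap r f) (hs : s * s = 1)
    (hp : 0 ≤ s * p) (hr : p ∈ closedDiamond r) (haxis : p.1 = 0 ∨ p.2 = 0) :
    s * f (s * p) = p := by
  rw [hf.eq_self _ (mul_mem_quadrantTriangle hs hp hr)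
    (haxis.imp (mul_eq_zero_of_right _) (mul_eq_zero_of_right _)),
    mul_mul_cancel_of_mul_self_eq_one hs]

section

variable (hQ : ∀ s, s * s = 1 → IsQuadrantMap r (Q s))
  (hQ' : ∀ s, s * s = 1 → IsQuadrantMap r (Q' s))
include hQ

theorem glueQuadrants_eq (hs : s * s = 1) (hp : 0 ≤ s * p) (hr : p ∈ closedDiamond r) :
    glueQuadrants Q p = s * Q s (s * p) := by
  have hσ := quadrantSign_mul_self p
  have hσp := quadrantSign_mul_nonneg p
  rcases eq_or_ne s (quadrantSign p) with rfl | hne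
  · rfl
  · have haxis := fst_eq_zero_or_snd_eq_zero hs hσ hp hσp hne
    rw [mul_eq_self_of_axis (hQ s hs) hs hp hr haxis]
    exact mul_eq_self_of_axis (hQ _ hσ) hσ hσp hr haxis

theorem glueQuadrants_eq_self (hr : p ∈ closedDiamond r) (haxis : p.1 = 0 ∨ p.2 = 0) :
    glueQuadrants Q p = p :=
  mul_eq_self_of_axis (hQ _ (quadrantSign_mul_self p)) (quadrantSign_mul_self p)
    (quadrantSign_mul_nonneg p) hr haxis

theorem mul_glueQuadrants (hs : s * s = 1) (hp : 0 ≤ s * p) (hr : p ∈ closedDiamond r) :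
    s * glueQuadrants Q p = Q s (s * p) := by
  rw [glueQuadrants_eq hQ hs hp hr, mul_mul_cancel_of_mul_self_eq_one hs]

theorem mul_glueQuadrants_nonneg (hs : s * s = 1) (hp : 0 ≤ s * p) (hr : p ∈ closedDiamond r) :
    0 ≤ s * glueQuadrants Q p := by
  rw [mul_glueQuadrants hQ hs hp hr]
  exact (hQ s hs).nonneg _ (mul_mem_quadrantTriangle hs hp hr)

theorem abs_fst_add_abs_snd_glueQuadrants (hr : p ∈ closedDiamond r) :
    |(glueQuadrants Q p).1| + |(glueQuadrants Q p).2| = |p.1| + |p.2| := by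
  have hσ := quadrantSign_mul_self p
  have hσp := quadrantSign_mul_nonneg p
  rw [← fst_add_snd_mul_eq hσ hσp, ← fst_add_snd_mul_eq hσ (mul_glueQuadrants_nonneg hQ hσ hσp hr),
    mul_glueQuadrants hQ hσ hσp hr,
    (hQ _ hσ).fst_add_snd _ (mul_mem_quadrantTriangle hσ hσp hr)]

theorem continuousOn_glueQuadrants : ContinuousOn (glueQuadrants Q) (closedDiamond r) := by
  have hfinite : Finite {s : ℝ × ℝ // s * s = 1} := by
    refine (((toFinite {(1 : ℝ), -1}).prod (toFinite {(1 : ℝ), -1})).subset ?_).to_subtype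
    exact fun s hs => eq_or_eq_neg_of_mul_self_eq_one hs
  have hcont := (locallyFinite_of_finite fun s : {s : ℝ × ℝ // s * s = 1} =>
    {p | 0 ≤ s.1 * p} ∩ closedDiamond r).continuousOn_iUnion (g := glueQuadrants Q)
    (fun s => (isClosed_le (by fun_prop) (by fun_prop)).inter
      (isClosed_le (by fun_prop) (by fun_prop))) fun ⟨s, hs⟩ => ?_
  · exact hcont.mono fun p hp => mem_iUnion.2
      ⟨⟨quadrantSign p, quadrantSign_mul_self p⟩, quadrantSign_mul_nonneg p, hp⟩
  · refine ContinuousOn.congr (f := fun p => s * Q s (s * p)) ?_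
      fun p hp => glueQuadrants_eq hQ hs hp.1 hp.2
    exact continuousOn_const.mul ((hQ s hs).continuousOn.comp (by fun_prop)
      fun p hp => mul_mem_quadrantTriangle hs hp.1 hp.2)

include hQ'

theorem leftInvOn_glueQuadrants
    (hinv : ∀ s, s * s = 1 → LeftInvOn (Q' s) (Q s) (quadrantTriangle r)) :
    LeftInvOn (glueQuadrants Q') (glueQuadrants Q) (closedDiamond r) := fun p hr => by
  have hσ := quadrantSign_mul_self p
  have hσp := quadrantSign_mul_nonneg p
  rw [glueQuadrants_eq hQ' hσ (mul_glueQuadrants_nonneg hQ hσ hσp hr)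
    ((abs_fst_add_abs_snd_glueQuadrants hQ hr).trans_le hr), mul_glueQuadrants hQ hσ hσp hr,
    hinv _ hσ (mul_mem_quadrantTriangle hσ hσp hr), mul_mul_cancel_of_mul_self_eq_one hσ]

end

end Gluing

/-! ### Phase curves in the first quadrant -/

section FirstQuadrant

theorem exists_primitive_strictMonoOn {k : ℝ → ℝ} {r : ℝ}
    (hk : ContinuousOn k (Ioo 0 r)) (hpos : ∀ ξ ∈ Ioo 0 r, 0 < k ξ) :
    ∃ T : ℝ → ℝ, (∀ ξ ∈ Ioo 0 r, HasDerivAt T (k ξ) ξ) ∧ StrictMonoOn T (Ioo 0 r) := by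
  have hderiv : ∀ ξ ∈ Ioo 0 r, HasDerivAt (fun u => ∫ x in (r / 2)..u, k x) (k ξ) ξ := by
    intro ξ hξ
    have hr : 0 < r := hξ.1.trans hξ.2
    have hhalf : r / 2 ∈ Ioo 0 r := ⟨half_pos hr, half_lt_self hr⟩
    exact intervalIntegral.integral_hasDerivAt_right
      (hk.mono (ordConnected_Ioo.uIcc_subset hhalf hξ)).intervalIntegrable
      (hk.stronglyMeasurableAtFilter isOpen_Ioo ξ hξ) (hk.continuousAt (Ioo_mem_nhds hξ.1 hξ.2))
  refine ⟨_, hderiv, strictMonoOn_of_hasDerivWithinAt_pos (convex_Ioo 0 r)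
    (fun ξ hξ => (hderiv ξ hξ).continuousAt.continuousWithinAt)
    (fun ξ hξ => (hderiv ξ (interior_subset hξ)).hasDerivWithinAt)
    fun ξ hξ => hpos ξ (interior_subset hξ)⟩

variable {P P' : ℝ × ℝ → ℝ × ℝ} {M M' : ℝ≥0} {r η ξ ζ : ℝ} {p : ℝ × ℝ}
  {J : Set ℝ} {c : ℝ → ℝ × ℝ} {m Z : ℝ → ℝ}

theorem fst_add_snd_field (P : ℝ × ℝ → ℝ × ℝ) (p : ℝ × ℝ) :
    ((principalField + P) p).1 + ((principalField + P) p).2 = radialSpeed P p := by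
  simp only [Pi.add_apply, Prod.fst_add, Prod.snd_add, principalField, radialSpeed]
  ring

theorem two_mul_sub_field (P : ℝ × ℝ → ℝ × ℝ) (p : ℝ × ℝ) :
    2 * (p.1 * ((principalField + P) p).1 - p.2 * ((principalField + P) p).2) =
      labelSpeed P p := by
  simp only [Pi.add_apply, Prod.fst_add, Prod.snd_add, principalField, labelSpeed]
  ring

theorem hasDerivAt_conePoint {Z' : ℝ} (hξ : ξ ≠ 0) (hZ : HasDerivAt Z Z' ξ) :
    HasDerivAt (fun u => conePoint u (Z u))
      (((conePoint ξ (Z ξ)).2 + Z' / 2) / ξ, ((conePoint ξ (Z ξ)).1 - Z' / 2) / ξ) ξ := by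
  have hquot : HasDerivAt (fun u => Z u / u) _ ξ := hZ.fun_div (hasDerivAt_id ξ) hξ
  refine ((((hasDerivAt_id' ξ).fun_add hquot).div_const 2).prodMk
    (((hasDerivAt_id' ξ).fun_sub hquot).div_const 2)).congr_deriv ?_
  ext <;> simp only [conePoint] <;> field_simp <;> ring

theorem radialSpeed_inv_smul_field (hξ : ξ ≠ 0) (hζ : |ζ| ≤ ξ ^ 2)
    (hspeed : radialSpeed P (conePoint ξ ζ) ≠ 0) :
    (radialSpeed P (conePoint ξ ζ))⁻¹ • (principalField + P) (conePoint ξ ζ) =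
      (((conePoint ξ ζ).2 + coneSlope P ξ ζ / 2) / ξ,
        ((conePoint ξ ζ).1 - coneSlope P ξ ζ / 2) / ξ) := by
  have hradial := fst_add_snd_field P (conePoint ξ ζ)
  have hlabel := two_mul_sub_field P (conePoint ξ ζ)
  have hsum := conePoint_fst_add_snd ξ ζ
  rw [coneSlope, clampAbs_of_abs_le hζ]
  generalize conePoint ξ ζ = p at *
  generalize (principalField + P) p = X at *
  ext
  · simp only [Prod.smul_fst, smul_eq_mul]
    field_simp
    linear_combination (-2 * X.1) * hsum + 2 * p.2 * hradial + hlabel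
  · simp only [Prod.smul_snd, smul_eq_mul]
    field_simp
    linear_combination (-2 * X.2) * hsum + 2 * p.1 * hradial - hlabel

theorem hasDerivWithinAt_fst {v : ℝ × ℝ} {t : ℝ} (hc : HasDerivWithinAt c v J t) :
    HasDerivWithinAt (fun t => (c t).1) v.1 J t :=
  HasFDerivAt.comp_hasDerivWithinAt (f := c) t hasFDerivAt_fst hc

theorem hasDerivWithinAt_snd {v : ℝ × ℝ} {t : ℝ} (hc : HasDerivWithinAt c v J t) :
    HasDerivWithinAt (fun t => (c t).2) v.2 J t :=
  HasFDerivAt.comp_hasDerivWithinAt (f := c) t hasFDerivAt_snd hc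

theorem hasDerivWithinAt_fst_add_snd {t : ℝ}
    (hc : HasDerivWithinAt c (η • (principalField + P) (c t)) J t) :
    HasDerivWithinAt (fun t => (c t).1 + (c t).2) (η * radialSpeed P (c t)) J t := by
  rw [← fst_add_snd_field, mul_add]
  exact (hasDerivWithinAt_fst hc).fun_add (hasDerivWithinAt_snd hc)

theorem hasDerivWithinAt_sq_sub_sq {t : ℝ}
    (hc : HasDerivWithinAt c (η • (principalField + P) (c t)) J t) :
    HasDerivWithinAt (fun t => (c t).1 ^ 2 - (c t).2 ^ 2) (η * labelSpeed P (c t)) J t := by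
  refine (((hasDerivWithinAt_fst hc).fun_pow 2).fun_sub
    ((hasDerivWithinAt_snd hc).fun_pow 2)).congr_deriv ?_
  simp only [← two_mul_sub_field, Prod.smul_fst, Prod.smul_snd, smul_eq_mul]
  ring

namespace IsQuarticRemainder

theorem radialSpeed_conePoint_pos (hP : IsQuarticRemainder P M r) (hξ : ξ ∈ Ioc 0 r)
    (hζ : |ζ| ≤ ξ ^ 2) : 0 < radialSpeed P (conePoint ξ ζ) :=
  hP.radialSpeed_pos (conePoint_mem_quadrantTriangle (Ioc_subset_Icc_self hξ) hζ)
    (hξ.1.trans_eq (conePoint_fst_add_snd ξ ζ).symm)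

theorem continuousOn_radialSpeed_conePoint (hP : IsQuarticRemainder P M r)
    (hZ : ContinuousOn Z (Icc 0 r)) :
    ContinuousOn (fun ξ => radialSpeed P (conePoint ξ (clampAbs (ξ ^ 2) (Z ξ)))) (Icc 0 r) := by
  refine hP.continuousOn_radialSpeed.comp ?_ fun ξ hξ => conePoint_clampAbs_mem hξ (Z ξ)
  refine continuousOn_conePoint.comp (f := fun ξ => (ξ, clampAbs (ξ ^ 2) (Z ξ)))
    (continuousOn_id.prodMk ?_) fun ξ hξ => ⟨hξ.1, abs_clampAbs_le (sq_nonneg ξ) (Z ξ)⟩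
  exact continuous_clampAbs.comp_continuousOn (f := fun ξ => (ξ ^ 2, Z ξ))
    ((continuousOn_pow 2).prodMk hZ)

theorem isOrbitArc_conePoint (hP : IsQuarticRemainder P M r) (hη : η = 1 ∨ η = -1)
    (hZ : IsIntegralCurveOn Z (coneSlope P) (Icc 0 r)) (hm : ContinuousOn m J)
    (hmr : MapsTo m J (Ioo 0 r)) (hmono : StrictMonoOn (fun t => η * m t) J)
    (hcone : ∀ t ∈ J, |Z (m t)| ≤ m t ^ 2) :
    IsOrbitArc (η • (principalField + P)) J (fun t => conePoint (m t) (Z (m t))) := by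
  set k : ℝ → ℝ := fun ξ => (radialSpeed P (conePoint ξ (clampAbs (ξ ^ 2) (Z ξ))))⁻¹
  have hpos : ∀ ξ ∈ Ioo 0 r, 0 < radialSpeed P (conePoint ξ (clampAbs (ξ ^ 2) (Z ξ))) := fun ξ hξ =>
    hP.radialSpeed_conePoint_pos (Ioo_subset_Ioc_self hξ) (abs_clampAbs_le (sq_nonneg ξ) (Z ξ))
  obtain ⟨T, hT, hTmono⟩ := exists_primitive_strictMonoOn (k := k)
    (((hP.continuousOn_radialSpeed_conePoint hZ.continuousOn).mono Ioo_subset_Icc_self).inv₀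
      fun ξ hξ => (hpos ξ hξ).ne') fun ξ hξ => inv_pos.2 (hpos ξ hξ)
  have hηη : η * η = 1 := mul_self_eq_one_iff.2 hη
  refine isOrbitArc_comp (β := fun ξ => conePoint ξ (Z ξ)) (T := fun ξ => η * T ξ)
    (κ := fun ξ => η * k ξ) hm (fun t ht => (hT _ (hmr ht)).const_mul η)
    (fun t ht => mul_ne_zero (left_ne_zero_of_mul_eq_one hηη) (inv_pos.2 (hpos _ (hmr ht))).ne')
    (fun s hs t ht hst => ?_) fun t ht => ?_
  · have hmst := hmono hs ht hst
    rcases hη with rfl | rfl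
    · simpa using hTmono (hmr hs) (hmr ht) (by simpa using hmst)
    · simpa using hTmono (hmr ht) (hmr hs) (by simpa using hmst)
  · have hk : k (m t) = (radialSpeed P (conePoint (m t) (Z (m t))))⁻¹ := by
      simp only [k, clampAbs_of_abs_le (hcone t ht)]
    have hZt := (hZ _ (Ioo_subset_Icc_self (hmr ht))).hasDerivAt
      (Icc_mem_nhds (hmr ht).1 (hmr ht).2)
    rw [Pi.smul_apply, smul_smul, mul_right_comm, hηη, one_mul, hk, radialSpeed_inv_smul_field
      (hmr ht).1.ne' (hcone t ht) (hP.radialSpeed_conePoint_pos (Ioo_subset_Ioc_self (hmr ht))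
        (hcone t ht)).ne']
    exact hasDerivAt_conePoint (hmr ht).1.ne' hZt

theorem labelSpeed_eq_coneSlope_mul (hP : IsQuarticRemainder P M r) (hp : p ∈ quadrantTriangle r)
    (hpos : 0 < p.1 + p.2) :
    labelSpeed P p = coneSlope P (p.1 + p.2) (p.1 ^ 2 - p.2 ^ 2) * radialSpeed P p := by
  rw [coneSlope, clampAbs_of_abs_le (abs_sq_sub_sq_le hp.1), conePoint_add_sq_sub_sq hp.1,
    div_mul_cancel₀ _ (hP.radialSpeed_pos hp hpos).ne']

section PhaseCurve

variable (hP : IsQuarticRemainder P M r) (hη : η = 1 ∨ η = -1)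
  (hc : IsIntegralCurveOn c (fun _ => η • (principalField + P)) J) (hJ : J.OrdConnected)
  (hcr : MapsTo c J (quadrantTriangle r)) (hpos : ∀ t ∈ J, 0 < (c t).1 + (c t).2)

include hP hη hc hJ hcr hpos

theorem strictMonoOn_fst_add_snd : StrictMonoOn (fun t => η * ((c t).1 + (c t).2)) J := by
  have hderiv : ∀ t ∈ J, HasDerivWithinAt (fun t => η * ((c t).1 + (c t).2))
      (η * (η * radialSpeed P (c t))) J t :=
    fun t ht => (hasDerivWithinAt_fst_add_snd (hc t ht)).const_mul η
  refine strictMonoOn_of_hasDerivWithinAt_pos hJ.convex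
    (fun t ht => (hderiv t ht).continuousWithinAt)
    (fun t ht => (hderiv t (interior_subset ht)).mono interior_subset) fun t ht => ?_
  rw [← mul_assoc, mul_self_eq_one_iff.2 hη, one_mul]
  exact hP.radialSpeed_pos (hcr (interior_subset ht)) (hpos t (interior_subset ht))

theorem leaf_eq_sq_sub_sq {h : ℝ} (hh : |h| ≤ r ^ 2) {t₀ : ℝ} (ht₀ : t₀ ∈ J)
    (heq : leaf (coneSlope P) r h ((c t₀).1 + (c t₀).2) = (c t₀).1 ^ 2 - (c t₀).2 ^ 2) :
    ∀ t ∈ J, leaf (coneSlope P) r h ((c t).1 + (c t).2) = (c t).1 ^ 2 - (c t).2 ^ 2 := by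
  have hmem : ∀ t ∈ J, (c t).1 + (c t).2 ∈ Icc 0 r := fun t ht => fst_add_snd_mem_Icc (hcr ht)
  have hr : 0 ≤ r := (hmem t₀ ht₀).1.trans (hmem t₀ ht₀).2
  set D : ℝ → ℝ := fun t =>
    (c t).1 ^ 2 - (c t).2 ^ 2 - leaf (coneSlope P) r h ((c t).1 + (c t).2)
  have hD : ∀ t ∈ J, HasDerivWithinAt D (η * labelSpeed P (c t) -
      coneSlope P ((c t).1 + (c t).2) (leaf (coneSlope P) r h ((c t).1 + (c t).2)) *
        (η * radialSpeed P (c t))) J t := fun t ht =>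
    (hasDerivWithinAt_sq_sub_sq (hc t ht)).fun_sub
      (((leaf_spec hP.isConeSlope hr hh).1 _ (hmem t ht)).comp t
        (hasDerivWithinAt_fst_add_snd (hc t ht)) hmem)
  have hbound : ∀ t ∈ J, ‖η * labelSpeed P (c t) -
      coneSlope P ((c t).1 + (c t).2) (leaf (coneSlope P) r h ((c t).1 + (c t).2)) *
        (η * radialSpeed P (c t))‖ ≤ 60 * M * 2 * ‖D t‖ := by
    intro t ht
    have hlip := (hP.lipschitzWith_coneSlope (hmem t ht)).norm_sub_le
      ((c t).1 ^ 2 - (c t).2 ^ 2) (leaf (coneSlope P) r h ((c t).1 + (c t).2))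
    have hspeed := hP.radialSpeed_pos (hcr ht) (hpos t ht)
    rw [hP.labelSpeed_eq_coneSlope_mul (hcr ht) (hpos t ht), ← mul_left_comm, ← sub_mul, norm_mul,
      norm_mul, show ‖η‖ = 1 by rcases hη with rfl | rfl <;> simp, one_mul,
      Real.norm_of_nonneg hspeed.le, mul_right_comm]
    exact mul_le_mul hlip (hP.radialSpeed_le_two (hcr ht)) hspeed.le
      (by positivity)
  intro t ht
  have hle := norm_le_exp_mul_norm hJ hD hbound ht₀ ht
  rw [show D t₀ = 0 from sub_eq_zero.2 heq.symm, norm_zero, mul_zero] at hle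
  exact (sub_eq_zero.1 (norm_le_zero_iff.1 hle)).symm

theorem exists_leaf_of_isIntegralCurveOn (hJ' : J.Nonempty) :
    ∃ h, ∀ t ∈ J, |h| ≤ ((c t).1 + (c t).2) ^ 2 ∧
      leaf (coneSlope P) r h ((c t).1 + (c t).2) = (c t).1 ^ 2 - (c t).2 ^ 2 := by
  obtain ⟨t₀, ht₀⟩ := hJ'
  have hmem : ∀ t ∈ J, (c t).1 + (c t).2 ∈ Icc 0 r := fun t ht => fst_add_snd_mem_Icc (hcr ht)
  obtain ⟨h, hh, heq⟩ :=
    exists_leaf_eq hP.isConeSlope (hmem t₀ ht₀) (abs_sq_sub_sq_le (hcr ht₀).1)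
  have hhr := abs_le_sq_of_mem_Icc (hmem t₀ ht₀) hh
  have hleaf := hP.leaf_eq_sq_sub_sq hη hc hJ hcr hpos hhr ht₀ heq
  refine ⟨h, fun t ht => ⟨abs_le_sq_of_abs_leaf_le_sq hP.isConeSlope (hmem t ht) hhr ?_,
    hleaf t ht⟩⟩
  rw [hleaf t ht]
  exact abs_sq_sub_sq_le (hcr ht).1

theorem isOrbitArc_leafTransfer (hP' : IsQuarticRemainder P' M' r)
    (hlt : ∀ t ∈ J, (c t).1 + (c t).2 < r) :
    IsOrbitArc (η • (principalField + P')) J (fun t => leafTransfer P P' r (c t)) := by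
  rcases J.eq_empty_or_nonempty with rfl | ⟨t₀, ht₀⟩
  · exact ⟨id, continuousOn_empty _, subsingleton_empty.strictMonoOn _, fun t ht => ht.elim⟩
  obtain ⟨h, hleaf⟩ := hP.exists_leaf_of_isIntegralCurveOn hη hc hJ hcr hpos ⟨t₀, ht₀⟩
  have hmem : ∀ t ∈ J, (c t).1 + (c t).2 ∈ Icc 0 r := fun t ht => fst_add_snd_mem_Icc (hcr ht)
  have hr : 0 ≤ r := (hmem t₀ ht₀).1.trans (hmem t₀ ht₀).2
  have hhr := abs_le_sq_of_mem_Icc (hmem t₀ ht₀) (hleaf t₀ ht₀).1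
  refine (hP'.isOrbitArc_conePoint hη (leaf_spec hP'.isConeSlope hr hhr).1
    (fun t ht => (hasDerivWithinAt_fst_add_snd (hc t ht)).continuousWithinAt)
    (fun t ht => ⟨hpos t ht, hlt t ht⟩) (hP.strictMonoOn_fst_add_snd hη hc hJ hcr hpos)
    fun t ht => abs_leaf_le_sq hP'.isConeSlope (hmem t ht) (hleaf t ht).1).congr fun t ht => ?_
  simp only
  rw [← hP.leafTransfer_conePoint_leaf (hmem t ht) (hleaf t ht).1, (hleaf t ht).2,
    conePoint_add_sq_sub_sq (hcr ht).1]

end PhaseCurve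

end IsQuarticRemainder

end FirstQuadrant

/-! ### Phase curves off the impasse line -/

section Reflections

/-- The perturbation seen through the reflection `s`: the conjugate of `principalField + P` by `s`
is `±(principalField + reflected s P)`. -/
def reflected (s : ℝ × ℝ) (P : ℝ × ℝ → ℝ × ℝ) (p : ℝ × ℝ) : ℝ × ℝ := s.swap * P (s * p)

/-- The map of the plane that carries the leaves of `principalField + P` in each quadrant to the
leaves of `principalField + P'` with the same labels. -/
noncomputable def planeTransfer (P P' : ℝ × ℝ → ℝ × ℝ) (r : ℝ) : ℝ × ℝ → ℝ × ℝ :=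
  glueQuadrants fun s => leafTransfer (reflected s P) (reflected s P') r

variable {P P' : ℝ × ℝ → ℝ × ℝ} {M M' : ℝ≥0} {r σ : ℝ} {s p : ℝ × ℝ} {J : Set ℝ} {c : ℝ → ℝ × ℝ}

theorem norm_mul_of_mul_self_eq_one (hs : s * s = 1) (p : ℝ × ℝ) : ‖s * p‖ = ‖p‖ := by
  obtain ⟨h₁ | h₁, h₂ | h₂⟩ := eq_or_eq_neg_of_mul_self_eq_one hs <;>
    simp [Prod.norm_def, h₁, h₂]

theorem mul_field_mul (hs : s * s = 1) (P : ℝ × ℝ → ℝ × ℝ) (p : ℝ × ℝ) :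
    s * (principalField + P) (s * p) = (s.1 * s.2) • (principalField + reflected s P) p := by
  obtain ⟨h₁ | h₁, h₂ | h₂⟩ := eq_or_eq_neg_of_mul_self_eq_one hs <;>
    ext <;> simp [principalField, reflected, h₁, h₂] <;> ring

theorem mul_smul_field_mul (hs : s * s = 1) (P : ℝ × ℝ → ℝ × ℝ) :
    (fun p => s * ((s.1 * s.2) • (principalField + reflected s P)) (s * p)) =
      principalField + P := by
  funext p
  rw [Pi.smul_apply, ← mul_field_mul hs, mul_mul_cancel_of_mul_self_eq_one hs,
    mul_mul_cancel_of_mul_self_eq_one hs]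

theorem IsQuarticRemainder.reflect (hP : IsQuarticRemainder P M r) (hs : s * s = 1) :
    IsQuarticRemainder (reflected s P) M r where
  map_zero := by rw [reflected, mul_zero, hP.map_zero, mul_zero]
  lipschitzOnWith ρ hρ := by
    have hswap : s.swap * s.swap = 1 := congrArg Prod.swap hs
    refine LipschitzOnWith.of_dist_le_mul fun p hp q hq => ?_
    rw [dist_eq_norm, dist_eq_norm, reflected, reflected, ← mul_sub,
      norm_mul_of_mul_self_eq_one hswap, ← norm_mul_of_mul_self_eq_one hs (p - q), mul_sub,
      ← dist_eq_norm, ← dist_eq_norm]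
    rw [mem_closedBall_zero_iff, ← norm_mul_of_mul_self_eq_one hs] at hp hq
    exact (hP.lipschitzOnWith ρ hρ).dist_le_mul _ (mem_closedBall_zero_iff.2 hp) _
      (mem_closedBall_zero_iff.2 hq)
  le_one := hP.le_one
  mul_le := hP.mul_le

theorem forall_pos_or_forall_neg_of_ne_zero {f : ℝ → ℝ} (hJ : J.OrdConnected)
    (hf : ContinuousOn f J) (hne : ∀ t ∈ J, f t ≠ 0) :
    (∀ t ∈ J, 0 < f t) ∨ ∀ t ∈ J, f t < 0 := by
  have himage : (f '' J).OrdConnected := (hJ.isPreconnected.image f hf).ordConnected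
  by_contra! h
  obtain ⟨⟨t₁, ht₁, hle⟩, t₂, ht₂, hge⟩ := h
  obtain ⟨t, ht, hzero⟩ :=
    himage.out (mem_image_of_mem f ht₁) (mem_image_of_mem f ht₂) ⟨hle, hge⟩
  exact hne t ht hzero

namespace IsQuarticRemainder

theorem mul_fst_field_pos (hP : IsQuarticRemainder P M r) (hσ : σ = 1 ∨ σ = -1) (hx : p.1 = 0)
    (hy : 0 < σ * p.2) (hr : |p.2| ≤ r) : 0 < σ * ((principalField + P) p).1 := by
  have habs : |p.2| = σ * p.2 := by
    rw [← abs_of_pos hy, abs_mul, show |σ| = 1 by rcases hσ with rfl | rfl <;> simp, one_mul]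
  have hnorm : ‖p‖ ≤ |p.2| := by simp [Prod.norm_def, hx]
  have hsmall : |σ * (P p).1| ≤ |p.2| ^ 3 / 8 := by
    calc |σ * (P p).1| = ‖(P p).1‖ := by rcases hσ with rfl | rfl <;> simp
      _ ≤ M * |p.2| ^ 4 := (norm_fst_le _).trans (hP.norm_le hr hnorm)
      _ = M * |p.2| * |p.2| ^ 3 := by ring
      _ ≤ 1 / 8 * |p.2| ^ 3 := mul_le_mul_of_nonneg_right (hP.mul_le_of_le hr) (by positivity)
      _ = |p.2| ^ 3 / 8 := by ring
  have hmain : σ * ((principalField + P) p).1 = |p.2| ^ 3 + σ * (P p).1 := by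
    simp only [habs, Pi.add_apply, Prod.fst_add, principalField]
    linear_combination (-σ * p.2 ^ 3) * mul_self_eq_one_iff.2 hσ + σ * p.1 * p.2 * hx
  have hcube : 0 < |p.2| ^ 3 := pow_pos (habs ▸ hy) 3
  linarith [(abs_le.1 hsmall).1]

variable (hP : IsQuarticRemainder P M r) (hP' : IsQuarticRemainder P' M' r)

include hP hP'

theorem isQuadrantMap_leafTransfer_reflected (s : ℝ × ℝ) (hs : s * s = 1) :
    IsQuadrantMap r (leafTransfer (reflected s P) (reflected s P') r) :=
  (hP.reflect hs).isQuadrantMap_leafTransfer (hP'.reflect hs)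

theorem leftInvOn_planeTransfer :
    LeftInvOn (planeTransfer P' P r) (planeTransfer P P' r) (closedDiamond r) :=
  leftInvOn_glueQuadrants (hP.isQuadrantMap_leafTransfer_reflected hP')
    (hP'.isQuadrantMap_leafTransfer_reflected hP)
    fun _ hs => (hP.reflect hs).leftInvOn_leafTransfer (hP'.reflect hs)

variable (hc : IsIntegralCurveOn c (fun _ => principalField + P) J) (hJ : J.OrdConnected)
  (hlt : ∀ t ∈ J, |(c t).1| + |(c t).2| < r)

include hc hJ hlt

theorem isOrbitArc_planeTransfer_of_quadrant (hs : s * s = 1) (hsc : ∀ t ∈ J, 0 ≤ s * c t)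
    (hne : ∀ t ∈ J, c t ≠ 0) :
    IsOrbitArc (principalField + P') J (fun t => planeTransfer P P' r (c t)) := by
  have hη : s.1 * s.2 = 1 ∨ s.1 * s.2 = -1 := by
    obtain ⟨h₁ | h₁, h₂ | h₂⟩ := eq_or_eq_neg_of_mul_self_eq_one hs <;> simp [h₁, h₂]
  have hcs : IsIntegralCurveOn (fun t => s * c t)
      (fun _ => (s.1 * s.2) • (principalField + reflected s P)) J := fun t ht => by
    have hfield := mul_field_mul hs P (s * c t)
    rw [mul_mul_cancel_of_mul_self_eq_one hs] at hfield
    exact ((hc t ht).const_mul s).congr_deriv hfield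
  have hsum : ∀ t ∈ J, (s * c t).1 + (s * c t).2 = |(c t).1| + |(c t).2| :=
    fun t ht => fst_add_snd_mul_eq hs (hsc t ht)
  have harc := ((hP.reflect hs).isOrbitArc_leafTransfer hη hcs hJ
    (fun t ht => mul_mem_quadrantTriangle hs (hsc t ht) (hlt t ht).le)
    (fun t ht => ?_) (hP'.reflect hs) fun t ht => (hsum t ht).trans_lt (hlt t ht)).mul_left hs
  · rw [mul_smul_field_mul hs] at harc
    exact harc.congr fun t ht => (glueQuadrants_eq (hP.isQuadrantMap_leafTransfer_reflected hP') hs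
      (hsc t ht) (hlt t ht).le).symm
  · rw [hsum t ht]
    refine (add_nonneg (abs_nonneg _) (abs_nonneg _)).lt_of_ne' fun hzero => hne t ht ?_
    rw [add_eq_zero_iff_of_nonneg (abs_nonneg _) (abs_nonneg _), abs_eq_zero, abs_eq_zero] at hzero
    exact Prod.ext hzero.1 hzero.2

-- An orbit crosses the axis `x = 0` at most once, as `x` increases with `σ * t` at each crossing.
theorem isOrbitArc_planeTransfer_of_halfPlane (hσ : σ = 1 ∨ σ = -1)
    (hy : ∀ t ∈ J, 0 < σ * (c t).2) :
    IsOrbitArc (principalField + P') J (fun t => planeTransfer P P' r (c t)) := by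
  have hne : ∀ t ∈ J, c t ≠ 0 := fun t ht hzero => (hy t ht).ne' (by rw [hzero]; exact mul_zero σ)
  have hσσ : σ * σ = 1 := mul_self_eq_one_iff.2 hσ
  have hderiv : ∀ t ∈ J, HasDerivWithinAt (fun t => σ * (c t).1)
      (σ * ((principalField + P) (c t)).1) J t :=
    fun t ht => (hasDerivWithinAt_fst (hc t ht)).const_mul σ
  have hcross : ∀ t ∈ J, σ * (c t).1 = 0 → 0 < σ * ((principalField + P) (c t)).1 := fun t ht h₀ =>
    hP.mul_fst_field_pos hσ ((mul_eq_zero.1 h₀).resolve_left (left_ne_zero_of_mul_eq_one hσσ))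
      (hy t ht) ((le_add_of_nonneg_left (abs_nonneg _)).trans (hlt t ht).le)
  have hside : ∀ a : ℝ, a * a = 1 → ∀ J' ⊆ J, J'.OrdConnected → (∀ t ∈ J', 0 ≤ a * (c t).1) →
      IsOrbitArc (principalField + P') J' (fun t => planeTransfer P P' r (c t)) :=
    fun a ha J' hsub hJ' hx => hP.isOrbitArc_planeTransfer_of_quadrant hP' (hc.mono hsub) hJ'
      (fun t ht => hlt t (hsub ht)) (s := (a, σ)) (Prod.ext ha hσσ)
      (fun t ht => ⟨hx t ht, (hy t (hsub ht)).le⟩) fun t ht => hne t (hsub ht)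
  have hright := hside σ hσσ
  have hleft := hside (-σ) ((neg_mul_neg σ σ).trans hσσ)
  simp only [neg_mul, neg_nonneg] at hleft
  by_cases hzero : ∃ t₀ ∈ J, σ * (c t₀).1 = 0
  · obtain ⟨t₀, ht₀, hx₀⟩ := hzero
    exact .glue ht₀
      (hleft _ inter_subset_left (hJ.inter ordConnected_Iic) fun t ht =>
        nonpos_of_forall_zero_deriv_pos hJ hderiv hcross ht.1 ht₀ ht.2 hx₀.le)
      (hright _ inter_subset_left (hJ.inter ordConnected_Ici) fun t ht =>
        nonneg_of_forall_zero_deriv_pos hJ hderiv hcross ht₀ ht.1 ht.2 hx₀.ge)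
  · push Not at hzero
    rcases forall_pos_or_forall_neg_of_ne_zero hJ
      (fun t ht => (hderiv t ht).continuousWithinAt) hzero with hx | hx
    exacts [hright J subset_rfl hJ fun t ht => (hx t ht).le,
      hleft J subset_rfl hJ fun t ht => (hx t ht).le]

theorem isOrbitArc_planeTransfer (hy : ∀ t ∈ J, (c t).2 ≠ 0) :
    IsOrbitArc (principalField + P') J (fun t => planeTransfer P P' r (c t)) := by
  rcases forall_pos_or_forall_neg_of_ne_zero hJ
    (fun t ht => (hasDerivWithinAt_snd (hc t ht)).continuousWithinAt) hy with hpos | hneg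
  · exact hP.isOrbitArc_planeTransfer_of_halfPlane hP' hc hJ hlt (.inl rfl)
      fun t ht => by simpa using hpos t ht
  · exact hP.isOrbitArc_planeTransfer_of_halfPlane hP' hc hJ hlt (.inr rfl)
      fun t ht => by simpa using hneg t ht

end IsQuarticRemainder

end Reflections

/-! ### Orbital equivalence -/

section Equivalence

/-- A perturbation lying above the Newton polygon of `principalField`: it vanishes at the origin and
its Lipschitz constant on the ball of radius `ρ` is `O(ρ³)`. -/
def VanishesToOrderFour (P : ℝ × ℝ → ℝ × ℝ) : Prop :=
  P 0 = 0 ∧ ∃ M r : ℝ≥0, 0 < r ∧ ∀ ρ ≤ r, LipschitzOnWith (M * ρ ^ 3) P (Metric.closedBall 0 ρ)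

/-- The open ball of radius `r` for the norm `|x| + |y|`. -/
def openDiamond (r : ℝ) : Set (ℝ × ℝ) := {p | |p.1| + |p.2| < r}

variable {P P' : ℝ × ℝ → ℝ × ℝ} {M M' : ℝ≥0} {r r' : ℝ} {J : Set ℝ} {c : ℝ → ℝ × ℝ}

theorem IsQuarticRemainder.mono (hP : IsQuarticRemainder P M r) (hr : r' ≤ r) :
    IsQuarticRemainder P M r' where
  map_zero := hP.map_zero
  lipschitzOnWith ρ hρ := hP.lipschitzOnWith ρ (hρ.trans hr)
  le_one := hr.trans hP.le_one
  mul_le := hP.mul_le_of_le hr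

theorem VanishesToOrderFour.exists_isQuarticRemainder (hP : VanishesToOrderFour P) :
    ∃ M : ℝ≥0, ∃ r : ℝ, 0 < r ∧ IsQuarticRemainder P M r := by
  obtain ⟨hzero, M, r, hr, hlip⟩ := hP
  refine ⟨M, min r (min 1 (1 / (8 * (M + 1)))), by positivity, hzero,
    fun ρ hρ => hlip ρ (hρ.trans (min_le_left _ _)), (min_le_right _ _).trans (min_le_left _ _), ?_⟩
  calc (M : ℝ) * min (r : ℝ) (min 1 (1 / (8 * (M + 1))))
      ≤ (M + 1) * (1 / (8 * (M + 1))) := by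
        gcongr
        exacts [le_add_of_nonneg_right zero_le_one, (min_le_right _ _).trans (min_le_right _ _)]
    _ = 1 / 8 := by field_simp

theorem isOpen_openDiamond (r : ℝ) : IsOpen (openDiamond r) :=
  isOpen_lt (by fun_prop) continuous_const

theorem openDiamond_subset_closedDiamond (r : ℝ) : openDiamond r ⊆ closedDiamond r :=
  fun _ (hp : _ < r) => hp.le

namespace IsQuarticRemainder

variable (hP : IsQuarticRemainder P M r) (hP' : IsQuarticRemainder P' M' r)

include hP hP'

theorem planeTransfer_eq_self {p : ℝ × ℝ} (hr : p ∈ closedDiamond r)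
    (haxis : p.1 = 0 ∨ p.2 = 0) : planeTransfer P P' r p = p :=
  glueQuadrants_eq_self (hP.isQuadrantMap_leafTransfer_reflected hP') hr haxis

theorem mapsTo_planeTransfer :
    MapsTo (planeTransfer P P' r) (openDiamond r) (openDiamond r) :=
  fun _ hp => (abs_fst_add_abs_snd_glueQuadrants (hP.isQuadrantMap_leafTransfer_reflected hP')
    (openDiamond_subset_closedDiamond r hp)).trans_lt hp

theorem mapsTo_planeTransfer_diff_impasse :
    MapsTo (planeTransfer P P' r) (openDiamond r \ {p | p.2 = 0})
      (openDiamond r \ {p | p.2 = 0}) := fun p hp => by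
  have himage := hP.mapsTo_planeTransfer hP' hp.1
  refine ⟨himage, fun hzero => hp.2 ?_⟩
  have hinv := hP.leftInvOn_planeTransfer hP' (openDiamond_subset_closedDiamond r hp.1)
  rw [hP'.planeTransfer_eq_self hP (openDiamond_subset_closedDiamond r himage) (.inr hzero)]
    at hinv
  exact hinv ▸ hzero

theorem exists_isPhaseCurve_planeTransfer
    (hc : IsPhaseCurve (principalField + P) (openDiamond r \ {p | p.2 = 0}) J c) :
    ∃ (J' : Set ℝ) (d : ℝ → ℝ × ℝ) (τ : ℝ → ℝ),
      IsPhaseCurve (principalField + P') (openDiamond r \ {p | p.2 = 0}) J' d ∧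
      ContinuousOn τ J ∧ StrictMonoOn τ J ∧ τ '' J = J' ∧
      ∀ t ∈ J, planeTransfer P P' r (c t) = d (τ t) := by
  obtain ⟨hJ, hJ', hcV, hderiv⟩ := hc
  exact (hP.isOrbitArc_planeTransfer hP' hderiv hJ (fun t ht => (hcV t ht).1)
    fun t ht => (hcV t ht).2).exists_isPhaseCurve hJ hJ'
      fun t ht => hP.mapsTo_planeTransfer_diff_impasse hP' (hcV t ht)

theorem orbitallyEquivAt (hr : 0 < r) :
    OrbitallyEquivAt (principalField + P) Prod.snd 0 (principalField + P') Prod.snd 0 := by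
  have hzero : 0 ∈ openDiamond r := by simpa [openDiamond] using hr
  have hsub := openDiamond_subset_closedDiamond r
  have hfix : ∀ p ∈ {p : ℝ × ℝ | p.2 = 0} ∩ openDiamond r, planeTransfer P P' r p = p :=
    fun p hp => hP.planeTransfer_eq_self hP' (hsub hp.2) (.inr hp.1)
  refine ⟨_, _, planeTransfer P P' r, planeTransfer P' P r, isOpen_openDiamond r,
    isOpen_openDiamond r, hzero, hzero, ?_, ?_, hP.mapsTo_planeTransfer hP',
    hP'.mapsTo_planeTransfer hP,
    fun z hz => hP.leftInvOn_planeTransfer hP' (hsub hz),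
    fun z hz => hP'.leftInvOn_planeTransfer hP (hsub hz),
    hP.planeTransfer_eq_self hP' (hsub hzero) (.inr rfl), ?_,
    fun J c => hP.exists_isPhaseCurve_planeTransfer hP',
    fun J d => hP'.exists_isPhaseCurve_planeTransfer hP⟩
  · exact (continuousOn_glueQuadrants (hP.isQuadrantMap_leafTransfer_reflected hP')).mono hsub
  · exact (continuousOn_glueQuadrants (hP'.isQuadrantMap_leafTransfer_reflected hP)).mono hsub
  · exact (image_congr hfix).trans (image_id' _)

end IsQuarticRemainder

theorem vanishesToOrderFour_zero : VanishesToOrderFour 0 :=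
  ⟨rfl, 0, 1, one_pos, fun _ _ => (LipschitzWith.const' 0).lipschitzOnWith⟩

theorem vanishesToOrderFour_pow_four : VanishesToOrderFour fun p => (p.1 ^ 4, p.2 ^ 4) := by
  have hpow {x y ρ : ℝ} (hx : |x| ≤ ρ) (hy : |y| ≤ ρ) :
      |x ^ 4 - y ^ 4| ≤ 4 * ρ ^ 3 * |x - y| := calc
    |x ^ 4 - y ^ 4| ≤ |x - y| * (4 : ℕ) * max |x| |y| ^ 3 := abs_pow_sub_pow_le x y 4
    _ ≤ |x - y| * (4 : ℕ) * ρ ^ 3 := by gcongr; exact max_le hx hy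
    _ = 4 * ρ ^ 3 * |x - y| := by push_cast; ring
  refine ⟨by simp, 4, 1, one_pos, fun _ _ => LipschitzOnWith.of_dist_le_mul fun p hp q hq => ?_⟩
  rw [mem_closedBall_zero_iff] at hp hq
  rw [dist_eq_norm, dist_eq_norm, Prod.mk_sub_mk, NNReal.coe_mul, NNReal.coe_pow,
    NNReal.coe_ofNat]
  refine max_le ((hpow ((norm_fst_le p).trans hp) ((norm_fst_le q).trans hq)).trans ?_)
    ((hpow ((norm_snd_le p).trans hp) ((norm_snd_le q).trans hq)).trans ?_)
  all_goals gcongr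
  exacts [norm_fst_le (p - q), norm_snd_le (p - q)]

theorem principal_part_example_general (hP : VanishesToOrderFour P)
    (hP' : VanishesToOrderFour P') :
    OrbitallyEquivAt (principalField + P) Prod.snd 0 (principalField + P') Prod.snd 0 := by
  obtain ⟨M, r, hr, hR⟩ := hP.exists_isQuarticRemainder
  obtain ⟨M', r', hr', hR'⟩ := hP'.exists_isQuarticRemainder
  exact (hR.mono (min_le_left r r')).orbitallyEquivAt (hR'.mono (min_le_right r r'))
    (lt_min hr hr')

end Equivalence

/-- (Topological determination by the Newton polygon: example.)
For the impasse function `δ(x,y) = y`, the constrained system with adjoint vector field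
`X(x,y) = (y³ + x²y + x⁴, x³ + xy² + y⁴)` is orientation-preserving `C⁰`-orbitally
equivalent at the origin to the system given by its Newton-polygon principal part
`X_Ω(x,y) = (y³ + x²y, x³ + xy²)`: the terms `x⁴` and `y⁴`, lying strictly above the
boundary of the Newton polygon, do not change the topological type of the phase portrait. -/
theorem principal_part_example :
    OrbitallyEquivAt
      (fun z : ℝ × ℝ => (z.2 ^ 3 + z.1 ^ 2 * z.2 + z.1 ^ 4, z.1 ^ 3 + z.1 * z.2 ^ 2 + z.2 ^ 4))
      (fun z => z.2) (0, 0)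
      (fun z : ℝ × ℝ => (z.2 ^ 3 + z.1 ^ 2 * z.2, z.1 ^ 3 + z.1 * z.2 ^ 2))
      (fun z => z.2) (0, 0) := by
  have hequiv := principal_part_example_general vanishesToOrderFour_pow_four
    vanishesToOrderFour_zero
  rwa [add_zero] at hequiv
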